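/- Suppose the vertex set I of Q is a disjoint union 𝒥 ∪ 𝒦 and there is a unique arrow of Q with one end in 𝒥 and the other in 𝒦, connecting vertices j ∈ 𝒥 and k ∈ 𝒦. Let Q̃ be the quiver with vertex set 𝒦 ∪ {j} consisting of this arrow together with all arrows of Q with head and tail in 𝒦, and let μ ∈ K^{𝒦∪{j}} agree with λ on 𝒦 and have μ_j = 0. Let α ∈ ℕ^I with α_j = 1 and λ·α_𝒥 = λ·α_𝒦 = 0, where α = α_𝒥 + α_𝒦 is the decomposition of α into parts supported in 𝒥 and 𝒦. Then α ∈ ℕR_λ^+ (for Q) if and only if α_𝒥 ∈ ℕR_λ^+ (for Q) and ε_j + α_𝒦 ∈ ℕR_μ^+ (for Q̃). -/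

import Mathlib

open scoped BigOperators

noncomputable section

/-- A quiver with a finite vertex set `I` and a finite arrow set `A`;
`h a` and `t a` are the head and the tail of the arrow `a`. -/
structure FinQuiver where
  I : Type
  [fintypeI : Fintype I]
  [decEqI : DecidableEq I]
  A : Type
  [fintypeA : Fintype A]
  h : A → I
  t : A → I

attribute [instance] FinQuiver.fintypeI FinQuiver.decEqI FinQuiver.fintypeA

namespace FinQuiver

variable (Q : FinQuiver)

/-- Arrows of the double quiver `Q̄` : every arrow `a : i → j` of `Q` (as `Sum.inl a`)
together with a reverse arrow `a* : j → i` (as `Sum.inr a`). -/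
@[reducible] def DA : Type := Q.A ⊕ Q.A

instance : Fintype Q.DA := inferInstanceAs (Fintype (Q.A ⊕ Q.A))

/-- Head of an arrow of the double quiver. -/
@[reducible] def dh : Q.DA → Q.I := fun a => match a with
  | Sum.inl a => Q.h a
  | Sum.inr a => Q.t a

/-- Tail of an arrow of the double quiver. -/
@[reducible] def dt : Q.DA → Q.I := fun a => match a with
  | Sum.inl a => Q.t a
  | Sum.inr a => Q.h a

/-- The symmetric bilinear form
`(α,β) = ∑_{i∈I} 2 α_i β_i − ∑_{a∈Q̄} α_{h(a)} β_{t(a)}` on `ℤ^I`. -/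
def bil (α β : Q.I → ℤ) : ℤ :=
  (∑ i, 2 * α i * β i) - ∑ a : Q.DA, α (Q.dh a) * β (Q.dt a)

/-- `p(α) = 1 − q(α) = 1 − α·α + ∑_{a ∈ Q} α_{t(a)} α_{h(a)}`. -/
def pp (α : Q.I → ℤ) : ℤ :=
  1 - (∑ i, α i * α i) + ∑ a : Q.A, α (Q.t a) * α (Q.h a)

/-- The coordinate vector `ε_i` at a vertex `i`. -/
def ev (i : Q.I) : Q.I → ℤ := fun j => if j = i then 1 else 0

/-- The coordinate vector of a vertex, as a vector of natural numbers. -/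
def evN (i : Q.I) : Q.I → ℕ := fun j => if j = i then 1 else 0

/-- A vertex is loopfree if no arrow has both its head and its tail there. -/
def Loopfree (i : Q.I) : Prop := ∀ a : Q.A, ¬ (Q.h a = i ∧ Q.t a = i)

/-- The reflection `s_i(α) = α − (α,ε_i) ε_i` at a (loopfree) vertex `i`. -/
def refl (i : Q.I) (α : Q.I → ℤ) : Q.I → ℤ := α - Q.bil α (Q.ev i) • Q.ev i

/-- Two vertices are joined by some arrow. -/
def Adj (i j : Q.I) : Prop :=
  ∃ a : Q.A, (Q.h a = i ∧ Q.t a = j) ∨ (Q.h a = j ∧ Q.t a = i)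

/-- The quiver is connected. -/
def Connected : Prop := ∀ i j : Q.I, Relation.ReflTransGen Q.Adj i j

/-- The support of the vector `α` is connected in `Q`. -/
def SuppConnected (α : Q.I → ℤ) : Prop :=
  ∀ i j : Q.I, α i ≠ 0 → α j ≠ 0 →
    Relation.ReflTransGen (fun x y => α x ≠ 0 ∧ α y ≠ 0 ∧ Q.Adj x y) i j

/-- The fundamental region: nonzero nonnegative vectors with connected support
such that `(α, ε_i) ≤ 0` for every vertex `i`. -/
def InFund (α : Q.I → ℤ) : Prop :=
  α ≠ 0 ∧ (∀ i, 0 ≤ α i) ∧ Q.SuppConnected α ∧ ∀ i, Q.bil α (Q.ev i) ≤ 0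

/-- The roots of the Kac root system attached to `Q` : the real roots form the orbit
of the simple roots (coordinate vectors at loopfree vertices) under the reflections at
loopfree vertices, and the imaginary roots form the orbit of `±(fundamental region)`
under these reflections. -/
inductive IsRoot : (Q.I → ℤ) → Prop
  | simple (i : Q.I) (hi : Q.Loopfree i) : IsRoot (Q.ev i)
  | fund (α : Q.I → ℤ) (hα : Q.InFund α) : IsRoot α
  | neg_fund (α : Q.I → ℤ) (hα : Q.InFund α) : IsRoot (-α)
  | reflect (i : Q.I) (hi : Q.Loopfree i) (α : Q.I → ℤ) (hα : IsRoot α) :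
      IsRoot (Q.refl i α)

/-- Positive roots: roots all of whose components are nonnegative. -/
def IsPosRoot (α : Q.I → ℤ) : Prop := Q.IsRoot α ∧ (∀ i, 0 ≤ α i) ∧ α ≠ 0

/-- The Tits form is positive semidefinite. -/
def PosSemidef : Prop := ∀ α : Q.I → ℤ, 0 ≤ Q.bil α α

/-- The Tits form is positive definite. -/
def PosDef : Prop := Q.PosSemidef ∧ ∀ α : Q.I → ℤ, Q.bil α α = 0 → α = 0

/-- Dynkin quivers: connected, with positive definite Tits form. -/
def IsDynkin : Prop := Q.Connected ∧ Q.PosDef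

/-- Extended Dynkin quivers: connected, with positive semidefinite but not
positive definite Tits form. -/
def IsExtDynkin : Prop := Q.Connected ∧ Q.PosSemidef ∧ ¬ Q.PosDef

/-- `δ` is the minimal positive imaginary root of an extended Dynkin quiver:
the minimal nonzero nonnegative vector in the radical of the Tits form. -/
def IsMinImag (δ : Q.I → ℤ) : Prop :=
  (∀ i, 0 ≤ δ i) ∧ δ ≠ 0 ∧ (∀ i, Q.bil δ (Q.ev i) = 0) ∧
    ∀ β : Q.I → ℤ, (∀ i, 0 ≤ β i) → β ≠ 0 → (∀ i, Q.bil β (Q.ev i) = 0) →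
      ∀ i, δ i ≤ β i

/-- The subquiver of `Q` on a subset `S` of vertices and a subset `B` of arrows. -/
def restrict (S : Set Q.I) (B : Set Q.A) (hh : ∀ a ∈ B, Q.h a ∈ S)
    (ht : ∀ a ∈ B, Q.t a ∈ S) : FinQuiver :=
  { I := S
    fintypeI := Fintype.ofFinite S
    decEqI := Classical.decEq _
    A := B
    fintypeA := Fintype.ofFinite B
    h := fun a => ⟨Q.h a.1, hh a.1 a.2⟩
    t := fun a => ⟨Q.t a.1, ht a.1 a.2⟩ }

/-- The support quiver of a vector: the full subquiver on the support of `β`. -/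
def suppQuiver (β : Q.I → ℤ) : FinQuiver :=
  Q.restrict {i | β i ≠ 0} {a | β (Q.h a) ≠ 0 ∧ β (Q.t a) ≠ 0}
    (fun _ ha => ha.1) (fun _ ha => ha.2)

/-- A dimension vector (of natural numbers), viewed in `ℤ^I`. -/
def toZ (α : Q.I → ℕ) : Q.I → ℤ := fun i => (α i : ℤ)

/-- An oriented cycle in the double quiver `Q̄`, consisting of `n+1` arrows,
the tail of each arrow being the head of the (cyclically) next one. -/
structure Cyc (Q' : FinQuiver) where
  n : ℕ
  ar : Fin (n + 1) → Q'.DA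
  compat : ∀ i : Fin (n + 1), Q'.dt (ar i) = Q'.dh (ar (i + 1))

section WithField

variable (K : Type) [Field K]

/-- `λ·α = ∑_i λ_i α_i`. -/
def pair (l : Q.I → K) (α : Q.I → ℤ) : K := ∑ i, l i * (α i : K)

/-- `R_λ^+`, the set of positive roots `α` with `λ·α = 0`. -/
def Rplus (l : Q.I → K) : Set (Q.I → ℤ) :=
  {α | Q.IsPosRoot α ∧ Q.pair K l α = 0}

/-- `ℕ R_λ^+`, the set of sums (including the empty sum `0`) of elements of `R_λ^+`. -/
def NRplus (l : Q.I → K) : Set (Q.I → ℤ) :=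
  (AddSubmonoid.closure (Q.Rplus K l) : AddSubmonoid (Q.I → ℤ))

/-- `Σ_λ` : the elements `α ∈ R_λ^+` with `p(α) > ∑ p(β⁽ᵗ⁾)` for every decomposition
of `α` as a sum of at least two elements `β⁽ᵗ⁾` of `R_λ^+`. -/
def SigmaSet (l : Q.I → K) : Set (Q.I → ℤ) :=
  {α | α ∈ Q.Rplus K l ∧
    ∀ (n : ℕ) (β : Fin n → (Q.I → ℤ)), 2 ≤ n → (∀ j, β j ∈ Q.Rplus K l) →
      α = ∑ j, β j → (∑ j, Q.pp (β j)) < Q.pp α}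

/-- The dual reflection `r_i(λ)_j = λ_j − (ε_i,ε_j) λ_i`. -/
def coRefl (i : Q.I) (l : Q.I → K) : Q.I → K :=
  fun j => l j - (Q.bil (Q.ev i) (Q.ev j) : ℤ) * l i

/-- A single admissible reflection applied to the pair `(λ, α)`:
a reflection at a loopfree vertex `i` with `λ_i ≠ 0`. -/
def AdmStep (x y : (Q.I → K) × (Q.I → ℤ)) : Prop :=
  ∃ i : Q.I, Q.Loopfree i ∧ x.1 i ≠ 0 ∧ y.1 = Q.coRefl K i x.1 ∧ y.2 = Q.refl i x.2

/-- `(ν,β)` is obtained from `(λ,α)` by a sequence of admissible reflections: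
the two pairs lie in the same class of the equivalence relation generated by
admissible reflections. -/
def AdmEquiv (x y : (Q.I → K) × (Q.I → ℤ)) : Prop :=
  Relation.EqvGen (Q.AdmStep K) x y

/-- The space `Rep(Q̄,α)` of representations of the double quiver. -/
def Rep (α : Q.I → ℕ) : Type :=
  ∀ a : Q.DA, Matrix (Fin (α (Q.dh a))) (Fin (α (Q.dt a))) K

/-- The moment map
`μ_α(x)_i = ∑_{a∈Q, h(a)=i} x_a x_{a*} − ∑_{a∈Q, t(a)=i} x_{a*} x_a`. -/
def moment (α : Q.I → ℕ) (x : Q.Rep K α) (i : Q.I) :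
    Matrix (Fin (α i)) (Fin (α i)) K :=
  (∑ a : Q.A, if h : Q.h a = i then
      (x (Sum.inl a) * x (Sum.inr a)).submatrix
        (Fin.cast (congrArg α h).symm) (Fin.cast (congrArg α h).symm)
    else 0)
  - ∑ a : Q.A, if h : Q.t a = i then
      (x (Sum.inr a) * x (Sum.inl a)).submatrix
        (Fin.cast (congrArg α h).symm) (Fin.cast (congrArg α h).symm)
    else 0

/-- The fibre `μ_α^{-1}(λ)` of the moment map over (the central element
corresponding to) `λ`. -/
def MomentFiber (l : Q.I → K) (α : Q.I → ℕ) : Set (Q.Rep K α) :=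
  {x | ∀ i : Q.I, Q.moment K α x i = l i • (1 : Matrix (Fin (α i)) (Fin (α i)) K)}

/-- The group `∏_i GL(α_i,K)`; it acts on `Rep(Q̄,α)` by conjugation, with the same
orbits and the same invariant functions as `G(α) = (∏_i GL(α_i,K))/K^*`. -/
def Gl (α : Q.I → ℕ) : Type := ∀ i : Q.I, Matrix.GeneralLinearGroup (Fin (α i)) K

/-- The conjugation action of `∏_i GL(α_i,K)` on `Rep(Q̄,α)`. -/
def glAct (α : Q.I → ℕ) (g : Q.Gl K α) (x : Q.Rep K α) : Q.Rep K α :=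
  fun a => (g (Q.dh a) : Matrix (Fin (α (Q.dh a))) (Fin (α (Q.dh a))) K) * x a *
    (((g (Q.dt a))⁻¹ : Matrix.GeneralLinearGroup (Fin (α (Q.dt a))) K) :
      Matrix (Fin (α (Q.dt a))) (Fin (α (Q.dt a))) K)

/-- Coordinates on `Rep(Q̄,α)`: matrix entries. -/
def Coords (α : Q.I → ℕ) : Type :=
  Σ a : Q.DA, Fin (α (Q.dh a)) × Fin (α (Q.dt a))

/-- The coordinate ring `K[V]` of a subset `V` of `Rep(Q̄,α)` : the algebra of
`K`-valued functions on `V` which are restrictions of polynomial functions. -/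
def fnRing (α : Q.I → ℕ) (V : Set (Q.Rep K α)) : Subalgebra K (↥V → K) :=
  (MvPolynomial.aeval
    (fun c : Q.Coords α => fun v : ↥V => v.1 c.1 c.2.1 c.2.2) :
    MvPolynomial (Q.Coords α) K →ₐ[K] (↥V → K)).range

end WithField

end FinQuiver

/-- The subalgebra of functions invariant under a relation (e.g. the orbit
relation of a group action). -/
def relInv (K : Type) [Field K] {V : Type} (R : V → V → Prop) :
    Subalgebra K (V → K) where
  carrier := {f | ∀ x y : V, R x y → f x = f y}
  mul_mem' := by
    intro f g hf hg x y hxy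
    simp only [Pi.mul_apply, hf x y hxy, hg x y hxy]
  one_mem' := fun x y _ => rfl
  add_mem' := by
    intro f g hf hg x y hxy
    simp only [Pi.add_apply, hf x y hxy, hg x y hxy]
  zero_mem' := fun x y _ => rfl
  algebraMap_mem' := fun c x y _ => rfl

namespace FinQuiver

variable (Q : FinQuiver) (K : Type) [Field K]

/-- The coordinate ring of the Marsden–Weinstein reduction
`N(λ,α) = μ_α^{-1}(λ) ⫽ G(α)` : the `G(α)`-invariant functions in the coordinate
ring of `μ_α^{-1}(λ)`.  Two such reductions are isomorphic as (affine) varieties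
exactly when these `K`-algebras are isomorphic. -/
def InvRing (l : Q.I → K) (α : Q.I → ℕ) :
    Subalgebra K (↥(Q.MomentFiber K l α) → K) :=
  Q.fnRing K α (Q.MomentFiber K l α) ⊓
    relInv K (fun x y : ↥(Q.MomentFiber K l α) =>
      ∃ g : Q.Gl K α, y.1 = Q.glAct K α g x.1)

/-- Index type for a product `∏_t X_t^{m_t}`. -/
@[reducible] def SymIdx (s : ℕ) (m : Fin s → ℕ) : Type := Σ t : Fin s, Fin (m t)

/-- The product `∏_{t} Rep(Q̄, d_t)^{m_t}` of representation spaces. -/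
def SymRep (s : ℕ) (m : Fin s → ℕ) (d : Fin s → (Q.I → ℕ)) : Type :=
  ∀ p : SymIdx s m, Q.Rep K (d p.1)

/-- The product `∏_t μ_{d_t}^{-1}(λ)^{m_t}` of moment map fibres. -/
def SymFiber (s : ℕ) (m : Fin s → ℕ) (d : Fin s → (Q.I → ℕ)) (l : Q.I → K) :
    Set (Q.SymRep K s m d) :=
  {x | ∀ p : SymIdx s m, x p ∈ Q.MomentFiber K l (d p.1)}

/-- Polynomial functions on the product of fibres. -/
def symFnRing (s : ℕ) (m : Fin s → ℕ) (d : Fin s → (Q.I → ℕ)) (l : Q.I → K) :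
    Subalgebra K (↥(Q.SymFiber K s m d l) → K) :=
  (MvPolynomial.aeval
    (fun c : Σ p : SymIdx s m, Q.Coords (d p.1) =>
      fun v : ↥(Q.SymFiber K s m d l) => v.1 c.1 c.2.1 c.2.2.1 c.2.2.2) :
    MvPolynomial (Σ p : SymIdx s m, Q.Coords (d p.1)) K →ₐ[K]
      (↥(Q.SymFiber K s m d l) → K)).range

/-- The componentwise action of the product of the groups `∏ GL(d_t)^{m_t}`. -/
def symGlAct (s : ℕ) (m : Fin s → ℕ) (d : Fin s → (Q.I → ℕ))
    (g : ∀ p : SymIdx s m, Q.Gl K (d p.1)) (x : Q.SymRep K s m d) :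
    Q.SymRep K s m d :=
  fun p => Q.glAct K (d p.1) (g p) (x p)

/-- The action of `∏_t S_{m_t}` permuting the factors of each `X_t^{m_t}`. -/
def symPermAct (s : ℕ) (m : Fin s → ℕ) (d : Fin s → (Q.I → ℕ))
    (π : ∀ t : Fin s, Equiv.Perm (Fin (m t))) (x : Q.SymRep K s m d) :
    Q.SymRep K s m d :=
  fun p => x ⟨p.1, π p.1 p.2⟩

/-- The coordinate ring of the product of symmetric products
`∏_t S^{m_t} N(λ, d_t)` of Marsden–Weinstein reductions: functions on
`∏_t μ_{d_t}^{-1}(λ)^{m_t}` which are polynomial, invariant under all the groups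
`G(d_t)` acting on the separate factors, and symmetric under permutations of the
`m_t` factors of each type `t`. -/
def SymInvRing (s : ℕ) (m : Fin s → ℕ) (d : Fin s → (Q.I → ℕ)) (l : Q.I → K) :
    Subalgebra K (↥(Q.SymFiber K s m d l) → K) :=
  Q.symFnRing K s m d l ⊓
    relInv K (fun x y : ↥(Q.SymFiber K s m d l) =>
      ∃ g : ∀ p : SymIdx s m, Q.Gl K (d p.1), y.1 = Q.symGlAct K s m d g x.1) ⊓
    relInv K (fun x y : ↥(Q.SymFiber K s m d l) =>
      ∃ π : ∀ t : Fin s, Equiv.Perm (Fin (m t)), y.1 = Q.symPermAct K s m d π x.1)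

/-- The trace function `tr_p` of an oriented cycle `p` in `Q̄` :
`tr_p(x) = tr(x_{a_1} ⋯ x_{a_ℓ})`, written out via matrix entries. -/
def cycTr (α : Q.I → ℕ) (p : Q.Cyc) (x : Q.Rep K α) : K :=
  ∑ c : ∀ i : Fin (p.n + 1), Fin (α (Q.dh (p.ar i))),
    ∏ i : Fin (p.n + 1),
      x (p.ar i) (c i) (Fin.cast (congrArg α (p.compat i)).symm (c (i + 1)))

/-- `U` is a subrepresentation of the `Π^λ`-module given by the point
`x ∈ Rep(Q̄,α)` : a collection of subspaces stable under all the maps `x_a`. -/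
def SubRep (α : Q.I → ℕ) (x : Q.Rep K α)
    (U : ∀ i : Q.I, Submodule K (Fin (α i) → K)) : Prop :=
  ∀ a : Q.DA, ∀ v ∈ U (Q.dt a), (x a).mulVec v ∈ U (Q.dh a)

/-- The module given by `x` has the simple module `S_{i₀}` (dimension vector
`ε_{i₀}`, all arrows acting as zero) as a composition factor: it has a subquotient
of dimension vector `ε_{i₀}` on which all arrows act as zero. -/
def HasSFactor (α : Q.I → ℕ) (i0 : Q.I) (x : Q.Rep K α) : Prop :=
  ∃ U W : ∀ i : Q.I, Submodule K (Fin (α i) → K),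
    Q.SubRep K α x U ∧ Q.SubRep K α x W ∧ (∀ i, U i ≤ W i) ∧
    (∀ i, Module.finrank K (W i) =
      Module.finrank K (U i) + (if i = i0 then 1 else 0)) ∧
    (∀ a : Q.DA, Q.dh a = i0 → Q.dt a = i0 →
      ∀ v ∈ W (Q.dt a), (x a).mulVec v ∈ U (Q.dh a))

/-- `W/U` is a simple subquotient of the module given by `x`; the simple
subquotients of a module are, up to isomorphism, exactly its composition factors. -/
def SimpleSubquot (α : Q.I → ℕ) (x : Q.Rep K α)
    (U W : ∀ i : Q.I, Submodule K (Fin (α i) → K)) : Prop :=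
  Q.SubRep K α x U ∧ Q.SubRep K α x W ∧ (∀ i, U i ≤ W i) ∧ U ≠ W ∧
    ∀ V : ∀ i : Q.I, Submodule K (Fin (α i) → K),
      Q.SubRep K α x V → (∀ i, U i ≤ V i) → (∀ i, V i ≤ W i) → V = U ∨ V = W

/-- The direct sum map `∏_{j=1}^m Rep(Q̄,δ) → Rep(Q̄,mδ)` (block diagonal). -/
def dsMap (δ : Q.I → ℕ) (m : ℕ) (y : Fin m → Q.Rep K δ) :
    Q.Rep K (fun i => m * δ i) :=
  fun a => Matrix.of fun r c =>
    if (finProdFinEquiv.symm r).1 = (finProdFinEquiv.symm c).1 then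
      y (finProdFinEquiv.symm r).1 a (finProdFinEquiv.symm r).2
        (finProdFinEquiv.symm c).2
    else 0

end FinQuiver

/-!
Roots `β` with `β_j = 1` can be built without reflecting at `j`. Starting from simple roots and from
vectors of connected support which are antidominant away from `j` and have coordinate at most `1`
at `j`, one reflects, always upwards, at vertices other than `j`; such a starting vector is itself a
root, because wherever it fails to be antidominant its support has a leaf, which a reflection
removes. Suppose now that `j` is a cut vertex separating two branches. A reflection at a vertex
`i ≠ j` only sees the branch containing `i`, so a vector with coordinate `1` at `j` is a positive
root if and only if its restrictions to the two branches are. A positive root with coordinate `0` at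
`j` has connected support and so lies on one branch. A decomposition of `α` into positive roots has
exactly one member with coordinate `1` at `j`, since `α_j = 1`, and it can therefore be split along
the cut or glued from decompositions on the branches; giving `j` the weight `0` in one branch
makes the weights add up.
-/

namespace FinQuiver

variable (Q : FinQuiver)

section CartanMatrix

/-- The entry `(ε_x, ε_y)` of the generalized Cartan matrix of `Q`. -/
def cartan (x y : Q.I) : ℤ := Q.bil (Q.ev x) (Q.ev y)

/-- The number of arrows of `Q̄` with head `x` and tail `y`; a loop of `Q` counts twice. -/
def numArrows (x y : Q.I) : ℕ := Finset.card {a : Q.DA | Q.dh a = x ∧ Q.dt a = y}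

variable {Q} {α β : Q.I → ℤ} {i j x y : Q.I}

lemma bil_comm (α β : Q.I → ℤ) : Q.bil α β = Q.bil β α := by
  unfold bil
  congr 1
  · exact Finset.sum_congr rfl fun i _ => by ring
  · refine Fintype.sum_equiv (Equiv.sumComm Q.A Q.A) _ _ ?_
    rintro (a | a) <;> exact mul_comm _ _

lemma bil_add_left (α β γ : Q.I → ℤ) : Q.bil (α + β) γ = Q.bil α γ + Q.bil β γ := by
  simp only [bil, Pi.add_apply, mul_add, add_mul, Finset.sum_add_distrib]
  ring

lemma bil_smul_left (c : ℤ) (α β : Q.I → ℤ) : Q.bil (c • α) β = c * Q.bil α β := by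
  simp only [bil, Pi.smul_apply, smul_eq_mul, mul_sub, Finset.mul_sum]
  congr 1 <;> exact Finset.sum_congr rfl fun _ _ => by ring

lemma bil_neg_left (α β : Q.I → ℤ) : Q.bil (-α) β = -Q.bil α β := by
  simpa using bil_smul_left (-1) α β

lemma bil_sub_left (α β γ : Q.I → ℤ) : Q.bil (α - β) γ = Q.bil α γ - Q.bil β γ := by
  rw [sub_eq_add_neg, bil_add_left, bil_neg_left, sub_eq_add_neg]

lemma bil_sum_left {ι : Type*} (s : Finset ι) (α : ι → Q.I → ℤ) (β : Q.I → ℤ) :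
    Q.bil (∑ k ∈ s, α k) β = ∑ k ∈ s, Q.bil (α k) β :=
  map_sum (AddMonoidHom.mk' (Q.bil · β) fun _ _ => bil_add_left _ _ _) α s

@[simp] lemma ev_self (i : Q.I) : Q.ev i i = 1 := if_pos rfl

lemma ev_of_ne (h : x ≠ i) : Q.ev i x = 0 := if_neg h

lemma ev_nonneg (i : Q.I) : 0 ≤ Q.ev i := fun x => by unfold ev; split_ifs <;> simp

lemma ev_le (hβ : 0 ≤ β) (hi : β i = 1) : Q.ev i ≤ β := fun x => by
  rcases eq_or_ne x i with rfl | hx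
  · rw [ev_self, hi]
  · exact (ev_of_ne hx).trans_le (hβ x)

lemma bil_ev_eq_sum (β : Q.I → ℤ) (i : Q.I) :
    Q.bil β (Q.ev i) = ∑ x, β x * Q.cartan x i := by
  have hβ : β = ∑ x, β x • Q.ev x := by
    ext y; simp [Finset.sum_apply, ev]
  conv_lhs => rw [hβ]
  simp only [bil_sum_left, bil_smul_left, cartan]

lemma cartan_comm (x y : Q.I) : Q.cartan x y = Q.cartan y x := bil_comm _ _

lemma cartan_eq_sub_numArrows (x y : Q.I) :
    Q.cartan x y = (if x = y then 2 else 0) - Q.numArrows x y := by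
  simp only [cartan, bil, numArrows, ev, Finset.card_filter, Nat.cast_sum, Nat.cast_ite,
    Nat.cast_one, Nat.cast_zero]
  congr 1
  · simp [eq_comm]
  · exact Finset.sum_congr rfl fun a _ => by rw [ite_zero_mul_ite_zero, one_mul]

lemma Adj.symm (h : Q.Adj x y) : Q.Adj y x := h.imp fun _ => Or.symm

lemma numArrows_pos_iff : 0 < Q.numArrows x y ↔ Q.Adj x y := by
  simp [numArrows, Finset.card_pos, Finset.Nonempty, Adj, dh, dt, exists_or, and_comm]

lemma one_lt_numArrows_self (h : ¬ Q.Loopfree i) : 1 < Q.numArrows i i := by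
  obtain ⟨a, ha⟩ : ∃ a, Q.h a = i ∧ Q.t a = i := by simpa [Loopfree] using h
  exact Finset.one_lt_card.mpr ⟨Sum.inl a, by simpa using ha, Sum.inr a,
    Finset.mem_filter.mpr ⟨Finset.mem_univ _, ha.2, ha.1⟩, Sum.inl_ne_inr⟩

lemma Loopfree.not_adj_self (h : Q.Loopfree i) : ¬ Q.Adj i i := fun ⟨a, ha⟩ => h a (by tauto)

lemma loopfree_iff_cartan : Q.Loopfree i ↔ Q.cartan i i = 2 := by
  rw [cartan_eq_sub_numArrows, if_pos rfl]
  refine ⟨fun h => ?_, fun h => by_contra fun h' => ?_⟩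
  · have := mt numArrows_pos_iff.mp h.not_adj_self
    omega
  · have := one_lt_numArrows_self h'
    omega

lemma bil_ev_self (hi : Q.Loopfree i) : Q.bil (Q.ev i) (Q.ev i) = 2 := loopfree_iff_cartan.mp hi

lemma cartan_self_nonpos (h : ¬ Q.Loopfree i) : Q.cartan i i ≤ 0 := by
  have := one_lt_numArrows_self h
  rw [cartan_eq_sub_numArrows, if_pos rfl]
  omega

lemma cartan_nonpos (h : x ≠ y) : Q.cartan x y ≤ 0 := by
  rw [cartan_eq_sub_numArrows, if_neg h]
  omega

lemma cartan_neg_iff (h : x ≠ y) : Q.cartan x y < 0 ↔ Q.Adj x y := by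
  rw [cartan_eq_sub_numArrows, if_neg h, ← numArrows_pos_iff]
  omega

lemma cartan_eq_zero (h : x ≠ y) (hxy : ¬ Q.Adj x y) : Q.cartan x y = 0 :=
  le_antisymm (cartan_nonpos h) (not_lt.mp (mt (cartan_neg_iff h).mp hxy))

lemma bil_ev_le_sum (hβ : 0 ≤ β) {s : Finset Q.I} (hi : i ∈ s) :
    Q.bil β (Q.ev i) ≤ ∑ x ∈ s, β x * Q.cartan x i := by
  have hcompl : ∑ x ∈ sᶜ, β x * Q.cartan x i ≤ 0 := Finset.sum_nonpos fun x hx =>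
    mul_nonpos_of_nonneg_of_nonpos (hβ x)
      (cartan_nonpos fun h => Finset.mem_compl.mp hx (h ▸ hi))
  rw [bil_ev_eq_sum, ← Finset.sum_add_sum_compl s]
  linarith

lemma bil_ev_nonpos_of_eq_zero (hβ : 0 ≤ β) (hi : β i = 0) : Q.bil β (Q.ev i) ≤ 0 := by
  simpa [hi] using bil_ev_le_sum hβ (Finset.mem_singleton_self i)

lemma bil_ev_nonpos_of_not_loopfree (hβ : 0 ≤ β) (hi : ¬ Q.Loopfree i) :
    Q.bil β (Q.ev i) ≤ 0 :=
  (bil_ev_le_sum hβ (Finset.mem_singleton_self i)).trans <| by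
    simpa using mul_nonpos_of_nonneg_of_nonpos (hβ i) (cartan_self_nonpos hi)

lemma loopfree_of_bil_ev_pos (hβ : 0 ≤ β) (h : 0 < Q.bil β (Q.ev i)) : Q.Loopfree i :=
  by_contra fun hi => h.not_ge (bil_ev_nonpos_of_not_loopfree hβ hi)

/- If the entry were at most `-2`, the form would be nonpositive on `β i ε_i + β j ε_j` paired
with `ε_i + ε_j`. -/
lemma neg_one_le_cartan (hβ : 0 ≤ β) (hij : i ≠ j) (hi : 0 < Q.bil β (Q.ev i))
    (hj : 0 < Q.bil β (Q.ev j)) : -1 ≤ Q.cartan i j := by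
  have hii := loopfree_iff_cartan.mp (loopfree_of_bil_ev_pos hβ hi)
  have hjj := loopfree_iff_cartan.mp (loopfree_of_bil_ev_pos hβ hj)
  have h₁ := bil_ev_le_sum hβ (Finset.mem_insert_self i {j})
  have h₂ := bil_ev_le_sum hβ (Finset.mem_insert_of_mem (a := j) (b := i)
    (Finset.mem_singleton_self j))
  rw [Finset.sum_pair hij] at h₁ h₂
  rw [cartan_comm j i, hii] at h₁
  rw [hjj] at h₂
  by_contra! hlt
  have : (β i + β j) * (Q.cartan i j + 2) ≤ 0 :=
    mul_nonpos_of_nonneg_of_nonpos (add_nonneg (hβ i) (hβ j)) (by omega)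
  linarith

end CartanMatrix

section Reflections

variable {Q} {β : Q.I → ℤ} {i j x y : Q.I}

lemma refl_apply_self (i : Q.I) (β : Q.I → ℤ) : Q.refl i β i = β i - Q.bil β (Q.ev i) := by
  simp [refl]

lemma refl_apply_of_ne (h : x ≠ i) (β : Q.I → ℤ) : Q.refl i β x = β x := by
  simp [refl, ev_of_ne h]

lemma bil_refl_ev (i : Q.I) (β : Q.I → ℤ) (y : Q.I) :
    Q.bil (Q.refl i β) (Q.ev y) = Q.bil β (Q.ev y) - Q.bil β (Q.ev i) * Q.cartan i y := by
  rw [refl, bil_sub_left, bil_smul_left, cartan]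

lemma bil_refl_ev_self (hi : Q.Loopfree i) (β : Q.I → ℤ) :
    Q.bil (Q.refl i β) (Q.ev i) = -Q.bil β (Q.ev i) := by
  rw [bil_refl_ev, loopfree_iff_cartan.mp hi]
  ring

lemma refl_refl (hi : Q.Loopfree i) (β : Q.I → ℤ) : Q.refl i (Q.refl i β) = β := by
  conv_lhs => rw [refl, bil_refl_ev_self hi, refl]
  module

lemma refl_neg (i : Q.I) (β : Q.I → ℤ) : Q.refl i (-β) = -Q.refl i β := by
  simp only [refl, bil_neg_left]
  module

lemma refl_eq_self (h : Q.bil β (Q.ev i) = 0) : Q.refl i β = β := by simp [refl, h]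

lemma refl_ev_self (hi : Q.Loopfree i) : Q.refl i (Q.ev i) = -Q.ev i := by
  rw [refl, bil_ev_self hi]
  module

lemma refl_add_of_bil_eq_zero {γ : Q.I → ℤ} (h : Q.bil γ (Q.ev i) = 0) (β : Q.I → ℤ) :
    Q.refl i (β + γ) = Q.refl i β + γ := by
  rw [refl, refl, bil_add_left, h]
  module

lemma refl_comm (h : Q.cartan i j = 0) (β : Q.I → ℤ) :
    Q.refl i (Q.refl j β) = Q.refl j (Q.refl i β) := by
  rw [refl, bil_refl_ev, cartan_comm, h, refl.eq_def Q j (Q.refl i β), bil_refl_ev, h]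
  simp only [refl]
  module

lemma refl_refl_refl (hi : Q.Loopfree i) (h : Q.cartan i j = -1) (β : Q.I → ℤ) :
    Q.refl i (Q.refl j (Q.refl i β)) =
      β - (Q.bil β (Q.ev i) + Q.bil β (Q.ev j)) • (Q.ev i + Q.ev j) := by
  have hj : Q.bil (Q.refl i β) (Q.ev j) = Q.bil β (Q.ev i) + Q.bil β (Q.ev j) := by
    rw [bil_refl_ev, h]
    ring
  have hji : Q.bil (Q.refl j (Q.refl i β)) (Q.ev i) = Q.bil β (Q.ev j) := by
    rw [bil_refl_ev, hj, bil_refl_ev_self hi, cartan_comm, h]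
    ring
  rw [refl, hji, refl, hj, refl]
  module

lemma refl_braid (hi : Q.Loopfree i) (hj : Q.Loopfree j) (h : Q.cartan i j = -1)
    (β : Q.I → ℤ) :
    Q.refl i (Q.refl j (Q.refl i β)) = Q.refl j (Q.refl i (Q.refl j β)) := by
  rw [refl_refl_refl hi h, refl_refl_refl hj ((cartan_comm j i).trans h), add_comm (Q.ev i),
    add_comm (Q.bil β (Q.ev i))]

lemma refl_refl_ev (hi : Q.Loopfree i) (h : Q.cartan i j = -1) :
    Q.refl i (Q.refl j (Q.ev i)) = Q.ev j := by
  have hj : Q.refl j (Q.ev i) = Q.ev j + Q.ev i := by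
    rw [refl, ← cartan, h]
    module
  rw [hj, refl, bil_add_left, ← cartan, ← cartan, cartan_comm, h, loopfree_iff_cartan.mp hi]
  module

lemma refl_ne_ev {β : Q.I → ℤ} (hi : Q.Loopfree i) (hj : Q.Loopfree j)
    (h : Q.cartan i j = -1) (hβ : Q.bil β (Q.ev j) < 0) : Q.refl i β ≠ Q.ev j := by
  intro hβj
  have : Q.bil β (Q.ev j) = 1 := by
    rw [← refl_refl hi β, hβj, bil_refl_ev, bil_ev_self hj, ← cartan, cartan_comm, h]
    rfl
  linarith

/-- The height `∑ β_i` of a nonnegative vector, as a natural number; a measure for inductions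
(it is `0` when the sum is negative). -/
def height (β : Q.I → ℤ) : ℕ := (∑ x, β x).toNat

lemma sum_refl (i : Q.I) (β : Q.I → ℤ) : ∑ x, Q.refl i β x = ∑ x, β x - Q.bil β (Q.ev i) := by
  simp [refl, ev, Finset.sum_sub_distrib]

lemma height_refl_lt (h : 0 < Q.bil β (Q.ev i)) (hβ : 0 ≤ Q.refl i β) :
    height (Q.refl i β) < height β := by
  have := sum_refl i β
  have := Finset.sum_nonneg fun x (_ : x ∈ Finset.univ) => hβ x
  unfold height
  omega

lemma height_lt_height_refl (hβ : 0 ≤ β) (h : Q.bil β (Q.ev i) < 0) :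
    height β < height (Q.refl i β) := by
  have := sum_refl i β
  have := Finset.sum_nonneg fun x (_ : x ∈ Finset.univ) => hβ x
  unfold height
  omega

end Reflections

section Support

variable {Q} {β γ : Q.I → ℤ} {i j x y : Q.I}

/-- Adjacency within the support of `β`, the relation whose classes are the components of the
support. -/
abbrev SuppAdj (β : Q.I → ℤ) (x y : Q.I) : Prop := β x ≠ 0 ∧ β y ≠ 0 ∧ Q.Adj x y

instance : Std.Symm (Q.SuppAdj β) := ⟨fun _ _ h => ⟨h.2.1, h.1, h.2.2.symm⟩⟩

lemma suppConnected_of_forall_reachable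
    (h : ∀ i, β i ≠ 0 → Relation.ReflTransGen (SuppAdj β) x i) : Q.SuppConnected β :=
  fun i k hi hk => .trans (Std.Symm.symm _ _ (h i hi)) (h k hk)

lemma reachable_mono (hsupp : ∀ z, β z ≠ 0 → γ z ≠ 0)
    (h : Relation.ReflTransGen (SuppAdj β) x y) : Relation.ReflTransGen (SuppAdj γ) x y :=
  Relation.ReflTransGen.mono (fun _ _ h => ⟨hsupp _ h.1, hsupp _ h.2.1, h.2.2⟩) _ _ h

lemma SuppConnected.of_union {δ : Q.I → ℤ} (hβ : Q.SuppConnected β) (hγ : Q.SuppConnected γ)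
    (hβj : β j ≠ 0) (hγj : γ j ≠ 0) (hβδ : ∀ z, β z ≠ 0 → δ z ≠ 0)
    (hγδ : ∀ z, γ z ≠ 0 → δ z ≠ 0) (hδ : ∀ z, δ z ≠ 0 → β z ≠ 0 ∨ γ z ≠ 0) :
    Q.SuppConnected δ :=
  suppConnected_of_forall_reachable fun z hz => (hδ z hz).elim
    (fun h => reachable_mono hβδ (hβ j z hβj h)) fun h => reachable_mono hγδ (hγ j z hγj h)

lemma exists_adj_of_bil_ev_ne_zero (h : Q.bil β (Q.ev i) ≠ 0) :
    ∃ x, β x ≠ 0 ∧ (x = i ∨ Q.Adj x i) := by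
  by_contra! hx
  refine h ((bil_ev_eq_sum β i).trans (Finset.sum_eq_zero fun x _ => ?_))
  rcases eq_or_ne (β x) 0 with h₀ | h₀
  · rw [h₀, zero_mul]
  · rw [cartan_eq_zero (hx x h₀).1 (hx x h₀).2, mul_zero]

lemma apply_ne_zero_of_le (hβ : 0 ≤ β) (hβγ : β ≤ γ) (hx : β x ≠ 0) : γ x ≠ 0 :=
  (((hβ x).lt_of_ne' hx).trans_le (hβγ x)).ne'

lemma le_refl_of_bil_ev_neg (h : Q.bil β (Q.ev i) < 0) : β ≤ Q.refl i β := by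
  intro x
  rcases eq_or_ne x i with rfl | hne
  · rw [refl_apply_self]
    linarith
  · rw [refl_apply_of_ne hne]

lemma eq_zero_of_refl_eq_zero {X : Set Q.I} (hβ : 0 ≤ β) (h : Q.bil β (Q.ev i) < 0)
    (hX : ∀ z ∉ X, Q.refl i β z = 0) : ∀ z ∉ X, β z = 0 := fun z hz =>
  of_not_not fun hβz => apply_ne_zero_of_le hβ (le_refl_of_bil_ev_neg h) hβz (hX z hz)

lemma mem_of_refl_eq_zero {X : Set Q.I} (hβ : 0 ≤ β) (h : Q.bil β (Q.ev i) < 0)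
    (hX : ∀ z ∉ X, Q.refl i β z = 0) : i ∈ X := by
  by_contra hi
  have := hX i hi
  rw [refl_apply_self, eq_zero_of_refl_eq_zero hβ h hX i hi] at this
  linarith

lemma SuppConnected.refl (hconn : Q.SuppConnected β) (hβ : 0 ≤ β)
    (h : Q.bil β (Q.ev i) < 0) : Q.SuppConnected (Q.refl i β) := by
  have hsupp : ∀ z, β z ≠ 0 → Q.refl i β z ≠ 0 :=
    fun z => apply_ne_zero_of_le hβ (le_refl_of_bil_ev_neg h)
  obtain ⟨x, hx, hxi⟩ := exists_adj_of_bil_ev_ne_zero h.ne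
  refine suppConnected_of_forall_reachable (x := x) fun y hy => ?_
  rcases eq_or_ne y i with rfl | hne
  · rcases hxi with rfl | hadj
    · exact .refl
    · exact .single ⟨hsupp x hx, hy, hadj⟩
  · rw [refl_apply_of_ne hne] at hy
    exact reachable_mono hsupp (hconn x y hx hy)

/- A path leaving the leaf `j` returns to its unique neighbour `x`, so it can be shortened. -/
lemma SuppConnected.of_leaf (hconn : Q.SuppConnected β) (hx : β x ≠ 0)
    (hleaf : ∀ z, z ≠ j → β z ≠ 0 → Q.Adj j z → z = x)
    (hγj : γ j = 0) (hγ : ∀ z, z ≠ j → γ z = β z) : Q.SuppConnected γ := by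
  have hne : ∀ z, γ z ≠ 0 → z ≠ j := fun z hz h => hz (h ▸ hγj)
  have key : ∀ z, Relation.ReflTransGen (SuppAdj β) x z → z ≠ j →
      Relation.ReflTransGen (SuppAdj γ) x z := by
    intro z hz
    induction hz with
    | refl => exact fun _ => .refl
    | @tail y z _ hyz ih =>
      intro hzj
      rcases eq_or_ne y j with rfl | hyj
      · rw [hleaf z hzj hyz.2.1 hyz.2.2]
      · exact (ih hyj).tail ⟨hγ y hyj ▸ hyz.1, hγ z hzj ▸ hyz.2.1, hyz.2.2⟩
  exact suppConnected_of_forall_reachable fun z hz =>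
    key z (hconn x z hx (hγ z (hne z hz) ▸ hz)) (hne z hz)

end Support

section RaisedRoots

/-- The vectors obtained, by reflections at vertices outside `S` which increase the coordinate
there, from the simple roots outside `S` and from the vectors of connected support with coordinates
at most `1` in `S` which pair nonpositively with `ε_i` for all `i ∉ S`. These are the positive
roots when `S = ∅`, and the positive roots with `β_j ≤ 1` when `S = {j}`. -/
inductive RaisedRoot (S : Set Q.I) : (Q.I → ℤ) → Prop
  | simple (i : Q.I) (hiS : i ∉ S) (hi : Q.Loopfree i) : RaisedRoot S (Q.ev i)
  | base (β : Q.I → ℤ) (hβ : 0 ≤ β) (hne : β ≠ 0) (hS : ∀ i ∈ S, β i ≤ 1)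
      (hconn : Q.SuppConnected β) (hbil : ∀ i ∉ S, Q.bil β (Q.ev i) ≤ 0) : RaisedRoot S β
  | raise (i : Q.I) (β : Q.I → ℤ) (hiS : i ∉ S) (hi : Q.Loopfree i) (hβ : RaisedRoot S β)
      (h : Q.bil β (Q.ev i) < 0) : RaisedRoot S (Q.refl i β)

variable {Q} {S : Set Q.I} {β : Q.I → ℤ} {i x y : Q.I}

lemma suppConnected_ev (i : Q.I) : Q.SuppConnected (Q.ev i) :=
  suppConnected_of_forall_reachable (x := i) fun y hy => by
    rw [show y = i from of_not_not (mt ev_of_ne hy)]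

namespace RaisedRoot

lemma nonneg (h : Q.RaisedRoot S β) : 0 ≤ β := by
  induction h with
  | simple i _ _ => exact ev_nonneg i
  | base _ hβ => exact hβ
  | raise i β _ _ _ h ih => exact ih.trans (le_refl_of_bil_ev_neg h)

lemma ne_zero (h : Q.RaisedRoot S β) : β ≠ 0 := by
  induction h with
  | simple i _ _ => exact fun h => by simpa using congrFun h i
  | base _ _ hne => exact hne
  | raise i β _ _ hβ h ih =>
    exact fun h₀ => ih (le_antisymm (h₀ ▸ le_refl_of_bil_ev_neg h) hβ.nonneg)

lemma apply_le_one (h : Q.RaisedRoot S β) (hx : x ∈ S) : β x ≤ 1 := by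
  induction h with
  | simple i hiS _ => simp [ev_of_ne (ne_of_mem_of_not_mem hx hiS)]
  | base _ _ _ hS => exact hS x hx
  | raise i β hiS _ _ _ ih => rwa [refl_apply_of_ne (ne_of_mem_of_not_mem hx hiS)]

lemma suppConnected (h : Q.RaisedRoot S β) : Q.SuppConnected β := by
  induction h with
  | simple i _ _ => exact suppConnected_ev i
  | base _ _ _ _ hconn => exact hconn
  | raise i β _ _ hβ h ih => exact ih.refl hβ.nonneg h

end RaisedRoot

end RaisedRoots

section PositiveRoots

variable {Q} {S : Set Q.I} {β γ : Q.I → ℤ} {i j x : Q.I}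

namespace RaisedRoot

lemma refl_raise_of_commute (hxS : x ∉ S) (hx : Q.Loopfree x) (hγx : Q.bil γ (Q.ev x) < 0)
    (hix : Q.cartan i x = 0) (h : Q.RaisedRoot S (Q.refl i γ)) :
    Q.RaisedRoot S (Q.refl i (Q.refl x γ)) := by
  rw [refl_comm hix]
  refine raise x _ hxS hx h ?_
  rwa [bil_refl_ev, hix, mul_zero, sub_zero]

lemma refl_raise_of_braid (hiS : i ∉ S) (hxS : x ∉ S) (hi : Q.Loopfree i) (hx : Q.Loopfree x)
    (hix : Q.cartan i x = -1) (hγx : Q.bil γ (Q.ev x) < 0)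
    (hpos : 0 < Q.bil γ (Q.ev i) + Q.bil γ (Q.ev x))
    (h : Q.RaisedRoot S (Q.refl x (Q.refl i γ))) :
    Q.RaisedRoot S (Q.refl i (Q.refl x γ)) := by
  have hxi : Q.cartan x i = -1 := (cartan_comm x i).trans hix
  have braid : Q.refl i (Q.refl x γ) = Q.refl x (Q.refl i (Q.refl x (Q.refl i γ))) := by
    rw [← refl_braid hi hx hix, refl_refl hi]
  have hi_neg : Q.bil (Q.refl x (Q.refl i γ)) (Q.ev i) = Q.bil γ (Q.ev x) := by
    simp only [bil_refl_ev, hix, hxi, loopfree_iff_cartan.mp hi]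
    ring
  have hx_neg : Q.bil (Q.refl i (Q.refl x (Q.refl i γ))) (Q.ev x) = -Q.bil γ (Q.ev i) := by
    rw [bil_refl_ev, hi_neg, bil_refl_ev_self hx, bil_refl_ev, hix]
    ring
  rw [braid]
  exact raise x _ hxS hx (raise i _ hiS hi h (by rwa [hi_neg])) (by rw [hx_neg]; linarith)

/- If the last raising reflection of `β` is at `x ≠ i`, it commutes with the one at `i` or satisfies
the braid relation with it, because `(ε_i, ε_x)` is `0` or `-1`. -/
lemma refl_of_bil_ev_pos (hβ : Q.RaisedRoot ∅ β) (hne : β ≠ Q.ev i)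
    (hpos : 0 < Q.bil β (Q.ev i)) : Q.RaisedRoot ∅ (Q.refl i β) := by
  have hi := loopfree_of_bil_ev_pos hβ.nonneg hpos
  induction hn : height β using Nat.strong_induction_on generalizing β i with
  | h n ih =>
  subst hn
  cases hβ with
  | simple x _ hx =>
    exact absurd hpos (cartan_nonpos fun h => hne (congrArg Q.ev h)).not_gt
  | base _ _ _ _ _ hbil => exact absurd hpos (hbil i (Set.notMem_empty i)).not_gt
  | raise x γ hxS hx hγ hγx =>
    rcases eq_or_ne i x with rfl | hix
    · rwa [refl_refl hi]
    have hlt : height γ < height (Q.refl x γ) := height_lt_height_refl hγ.nonneg hγx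
    have hcartan : -1 ≤ Q.cartan i x :=
      neg_one_le_cartan (hγ.raise x γ hxS hx hγx).nonneg hix hpos
        (by rw [bil_refl_ev_self hx]; linarith)
    rw [bil_refl_ev, cartan_comm] at hpos
    rcases (by have := cartan_nonpos hix; omega : Q.cartan i x = 0 ∨ Q.cartan i x = -1) with h | h
    · rw [h, mul_zero, sub_zero] at hpos
      refine refl_raise_of_commute hxS hx hγx h (ih _ hlt hγ ?_ hpos hi rfl)
      rintro rfl
      exact hγx.ne h
    · rw [h] at hpos
      rcases eq_or_ne γ (Q.ev i) with rfl | hγi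
      · rw [refl_refl_ev hi h]
        exact simple x hxS hx
      have hγi' : Q.RaisedRoot ∅ (Q.refl i γ) := ih _ hlt hγ hγi (by linarith) hi rfl
      have hγix : 0 < Q.bil (Q.refl i γ) (Q.ev x) := by
        rw [bil_refl_ev, h]
        linarith
      refine refl_raise_of_braid hxS hxS hi hx h hγx (by linarith)
        (ih _ ((height_refl_lt (by linarith) hγi'.nonneg).trans hlt) hγi'
          (refl_ne_ev hi hx h hγx) hγix hx rfl)

lemma refl (hβ : Q.RaisedRoot ∅ β) (hi : Q.Loopfree i) (hne : β ≠ Q.ev i) :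
    Q.RaisedRoot ∅ (Q.refl i β) := by
  rcases lt_trichotomy (Q.bil β (Q.ev i)) 0 with h | h | h
  · exact hβ.raise i β (Set.notMem_empty i) hi h
  · rwa [refl_eq_self h]
  · exact hβ.refl_of_bil_ev_pos hne h

lemma isPosRoot (h : Q.RaisedRoot ∅ β) : Q.IsPosRoot β := by
  refine ⟨?_, h.nonneg, h.ne_zero⟩
  induction h with
  | simple i _ hi => exact .simple i hi
  | base β hβ hne _ hconn hbil => exact .fund β ⟨hne, hβ, hconn, fun i => hbil i (by simp)⟩
  | raise i β _ hi _ _ ih => exact .reflect i hi β ih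

end RaisedRoot

lemma InFund.raisedRoot (h : Q.InFund β) : Q.RaisedRoot ∅ β :=
  .base β h.2.1 h.1 (by simp) h.2.2.1 fun i _ => h.2.2.2 i

lemma IsRoot.raisedRoot_or_neg (h : Q.IsRoot β) : Q.RaisedRoot ∅ β ∨ Q.RaisedRoot ∅ (-β) := by
  have reflect : ∀ (i : Q.I) (γ : Q.I → ℤ), Q.Loopfree i → Q.RaisedRoot ∅ γ →
      Q.RaisedRoot ∅ (Q.refl i γ) ∨ Q.RaisedRoot ∅ (-Q.refl i γ) := by
    intro i γ hi hγ
    rcases eq_or_ne γ (Q.ev i) with rfl | hne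
    · rw [refl_ev_self hi, neg_neg]
      exact Or.inr hγ
    · exact Or.inl (hγ.refl hi hne)
  induction h with
  | simple i hi => exact Or.inl (.simple i (Set.notMem_empty i) hi)
  | fund β hβ => exact Or.inl hβ.raisedRoot
  | neg_fund β hβ => exact Or.inr ((neg_neg β).symm ▸ hβ.raisedRoot)
  | reflect i hi β _ ih =>
    rcases ih with h | h
    · exact reflect i β hi h
    · simpa only [refl_neg, neg_neg, or_comm] using reflect i (-β) hi h

lemma isPosRoot_iff : Q.IsPosRoot β ↔ Q.RaisedRoot ∅ β := by
  refine ⟨fun ⟨hroot, hβ, hne⟩ => ?_, RaisedRoot.isPosRoot⟩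
  refine hroot.raisedRoot_or_neg.resolve_right fun hneg => hne (le_antisymm ?_ hβ)
  exact neg_nonneg.mp hneg.nonneg

end PositiveRoots

section CoordinateAtMostOne

variable {Q} {β : Q.I → ℤ} {j x : Q.I}

/-- The vector `β` has a leaf at `j`, attached to the vertex `x` by a single arrow, with
`β_j = β_x = 1`: no other vertex of the support is adjacent to `j`. -/
structure IsLeaf (β : Q.I → ℤ) (j x : Q.I) : Prop where
  loopfree : Q.Loopfree j
  ne : x ≠ j
  apply_leaf : β j = 1
  apply_neighbour : β x = 1
  cartan_eq : Q.cartan x j = -1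
  mul_cartan_eq_zero : ∀ z, z ≠ j → z ≠ x → β z * Q.cartan z j = 0

lemma SuppConnected.exists_adj (hconn : Q.SuppConnected β) (hj : β j = 1) (hne : β ≠ Q.ev j) :
    ∃ x, β x ≠ 0 ∧ Q.Adj j x := by
  obtain ⟨z, hz⟩ := Function.ne_iff.mp hne
  have hzj : z ≠ j := by
    rintro rfl
    exact hz (hj.trans (ev_self z).symm)
  rw [ev_of_ne hzj] at hz
  obtain h | ⟨x, hjx, _⟩ := (hconn j z (by simp [hj]) hz).cases_head
  · exact absurd h.symm hzj
  · exact ⟨x, hjx.2⟩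

/- In `(β, ε_j) = 2 + ∑_{x ≠ j} β_x (ε_x, ε_j) > 0` every summand is nonpositive, so exactly one of
them is nonzero and it equals `-1`. -/
lemma SuppConnected.exists_isLeaf (hconn : Q.SuppConnected β) (hβ : 0 ≤ β) (hj : β j = 1)
    (hne : β ≠ Q.ev j) (hpos : 0 < Q.bil β (Q.ev j)) : ∃ x, Q.IsLeaf β j x := by
  have hloop := loopfree_of_bil_ev_pos hβ hpos
  obtain ⟨x, hβx, hjx⟩ := hconn.exists_adj hj hne
  have hxj : x ≠ j := by
    rintro rfl
    exact hloop.not_adj_self hjx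
  have hcartan := (cartan_neg_iff hxj).mpr hjx.symm
  have hβx' : 0 < β x := (hβ x).lt_of_ne' hβx
  have hprod : β x * Q.cartan x j = -1 := by
    have hsum := bil_ev_le_sum hβ (s := {j, x}) (i := j) (by simp)
    rw [Finset.sum_pair hxj.symm, hj, loopfree_iff_cartan.mp hloop] at hsum
    nlinarith
  have hβx_one : β x = 1 := by nlinarith
  refine ⟨x, hloop, hxj, hj, hβx_one, by rwa [hβx_one, one_mul] at hprod, fun z hzj hzx => ?_⟩
  have hsum := bil_ev_le_sum hβ (s := {j, x, z}) (i := j) (by simp)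
  rw [Finset.sum_insert (by simp [hxj.symm, hzj.symm]), Finset.sum_pair hzx.symm, hj, hprod,
    loopfree_iff_cartan.mp hloop] at hsum
  have := mul_nonpos_of_nonneg_of_nonpos (hβ z) (cartan_nonpos hzj)
  linarith

namespace IsLeaf

lemma bil_ev (h : Q.IsLeaf β j x) : Q.bil β (Q.ev j) = 1 := by
  rw [bil_ev_eq_sum, ← Finset.sum_subset (Finset.subset_univ {j, x}), Finset.sum_pair h.ne.symm,
    h.apply_leaf, h.apply_neighbour, h.cartan_eq, loopfree_iff_cartan.mp h.loopfree]
  · rfl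
  · intro z _ hz
    rw [Finset.mem_insert, Finset.mem_singleton, not_or] at hz
    exact h.mul_cartan_eq_zero z hz.1 hz.2

lemma refl_apply_leaf (h : Q.IsLeaf β j x) : Q.refl j β j = 0 := by
  rw [refl_apply_self, h.bil_ev, h.apply_leaf, sub_self]

lemma refl_apply_neighbour (h : Q.IsLeaf β j x) : Q.refl j β x = 1 := by
  rw [refl_apply_of_ne h.ne, h.apply_neighbour]

lemma refl_nonneg (h : Q.IsLeaf β j x) (hβ : 0 ≤ β) : 0 ≤ Q.refl j β := by
  intro z
  rcases eq_or_ne z j with rfl | hz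
  · exact h.refl_apply_leaf.ge
  · exact (refl_apply_of_ne hz β).symm ▸ hβ z

lemma suppConnected_refl (h : Q.IsLeaf β j x) (hconn : Q.SuppConnected β) :
    Q.SuppConnected (Q.refl j β) := by
  refine hconn.of_leaf (x := x) (by simp [h.apply_neighbour]) (fun z hzj hβz hadj => ?_)
    h.refl_apply_leaf fun z hz => refl_apply_of_ne hz β
  by_contra hzx
  exact mul_ne_zero hβz ((cartan_neg_iff hzj).mpr hadj.symm).ne (h.mul_cartan_eq_zero z hzj hzx)

lemma bil_refl_ev_nonpos (h : Q.IsLeaf β j x) (hβ : 0 ≤ β)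
    (hbil : ∀ i ≠ j, Q.bil β (Q.ev i) ≤ 0) {i : Q.I} (hi : i ≠ x) :
    Q.bil (Q.refl j β) (Q.ev i) ≤ 0 := by
  rcases eq_or_ne i j with rfl | hij
  · rw [bil_refl_ev_self h.loopfree, h.bil_ev]
    norm_num
  · rcases mul_eq_zero.mp (h.mul_cartan_eq_zero i hij hi) with h₀ | h₀
    · exact bil_ev_nonpos_of_eq_zero (h.refl_nonneg hβ) (by rw [refl_apply_of_ne hij, h₀])
    · rw [bil_refl_ev, cartan_comm, h₀, mul_zero, sub_zero]
      exact hbil i hij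

end IsLeaf

/- If the pairing at `j` is positive then `j` is a leaf; reflecting there removes it, and the
neighbour of `j` takes over its role. -/
lemma SuppConnected.raisedRoot_empty (hconn : Q.SuppConnected β) (hβ : 0 ≤ β) (hne : β ≠ 0)
    (hj : β j ≤ 1) (hbil : ∀ i ≠ j, Q.bil β (Q.ev i) ≤ 0) : Q.RaisedRoot ∅ β := by
  induction hn : height β using Nat.strong_induction_on generalizing β j with
  | h n ih =>
  subst hn
  rcases le_or_gt (Q.bil β (Q.ev j)) 0 with hneg | hpos
  · refine .base β hβ hne (by simp) hconn fun i _ => ?_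
    rcases eq_or_ne i j with rfl | hij
    exacts [hneg, hbil i hij]
  have hj_one : β j = 1 := by
    have : β j ≠ 0 := fun h => hpos.not_ge (bil_ev_nonpos_of_eq_zero hβ h)
    have : 0 ≤ β j := hβ j
    omega
  rcases eq_or_ne β (Q.ev j) with rfl | hβj
  · exact .simple j (Set.notMem_empty j) (loopfree_of_bil_ev_pos hβ hpos)
  obtain ⟨x, hleaf⟩ := hconn.exists_isLeaf hβ hj_one hβj hpos
  have hβ' := hleaf.refl_nonneg hβ
  have lowered : Q.RaisedRoot ∅ (Q.refl j β) :=
    ih _ (height_refl_lt hpos hβ') (hleaf.suppConnected_refl hconn) hβ'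
      (fun h => by simpa [h] using hleaf.refl_apply_neighbour) hleaf.refl_apply_neighbour.le
      (fun i hi => hleaf.bil_refl_ev_nonpos hβ hbil hi) rfl
  rw [← refl_refl hleaf.loopfree β]
  refine lowered.raise j _ (Set.notMem_empty j) hleaf.loopfree ?_
  rwa [bil_refl_ev_self hleaf.loopfree, neg_lt_zero]

lemma RaisedRoot.empty_of_singleton (h : Q.RaisedRoot {j} β) : Q.RaisedRoot ∅ β := by
  induction h with
  | simple i _ hi => exact .simple i (Set.notMem_empty i) hi
  | base β hβ hne hS hconn hbil => exact hconn.raisedRoot_empty hβ hne (hS j rfl) hbil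
  | raise i β _ hi _ h ih => exact .raise i β (Set.notMem_empty i) hi ih h

lemma RaisedRoot.singleton_of_empty (h : Q.RaisedRoot ∅ β) (hj : β j ≤ 1) :
    Q.RaisedRoot {j} β := by
  induction hn : height β using Nat.strong_induction_on generalizing β with
  | h n ih =>
  subst hn
  by_cases hbil : ∀ i ∉ ({j} : Set Q.I), Q.bil β (Q.ev i) ≤ 0
  · exact .base β h.nonneg h.ne_zero (by simpa using hj) h.suppConnected hbil
  push Not at hbil
  obtain ⟨i, hij, hpos⟩ := hbil
  have hi := loopfree_of_bil_ev_pos h.nonneg hpos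
  rcases eq_or_ne β (Q.ev i) with rfl | hne
  · exact .simple i hij hi
  have hrefl := h.refl_of_bil_ev_pos hne hpos
  rw [← refl_refl hi β]
  refine .raise i _ hij hi
    (ih _ (height_refl_lt hpos hrefl.nonneg) hrefl ?_ rfl)
    (by rwa [bil_refl_ev_self hi, neg_lt_zero])
  rwa [refl_apply_of_ne (Ne.symm hij)]

lemma raisedRoot_singleton_iff : Q.RaisedRoot {j} β ↔ Q.IsPosRoot β ∧ β j ≤ 1 := by
  rw [isPosRoot_iff]
  exact ⟨fun h => ⟨h.empty_of_singleton, h.apply_le_one rfl⟩, fun h => h.1.singleton_of_empty h.2⟩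

end CoordinateAtMostOne

section Branches

variable {Q} {X Y : Set Q.I} {β γ δ : Q.I → ℤ} {i j x y : Q.I}

/-- A branch of `Q` at the vertex `j`: a set of vertices containing `j` whose other elements are
adjacent to no vertex outside the set. -/
structure IsBranch (j : Q.I) (X : Set Q.I) : Prop where
  mem : j ∈ X
  eq_of_adj : ∀ {x y}, x ∈ X → y ∉ X → Q.Adj x y → x = j

namespace IsBranch

lemma cartan_eq_zero (hX : Q.IsBranch j X) (hi : i ∈ X) (hij : i ≠ j) (hy : y ∉ X) :
    Q.cartan y i = 0 :=
  FinQuiver.cartan_eq_zero (ne_of_mem_of_not_mem hi hy).symm fun h =>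
    hij (hX.eq_of_adj hi hy h.symm)

lemma bil_ev_congr (hX : Q.IsBranch j X) (hi : i ∈ X) (hij : i ≠ j)
    (h : ∀ x ∈ X, β x = γ x) : Q.bil β (Q.ev i) = Q.bil γ (Q.ev i) := by
  rw [bil_ev_eq_sum, bil_ev_eq_sum]
  refine Finset.sum_congr rfl fun x _ => ?_
  by_cases hx : x ∈ X
  · rw [h x hx]
  · rw [hX.cartan_eq_zero hi hij hx, mul_zero, mul_zero]

lemma bil_ev_eq_zero (hX : Q.IsBranch j X) (hi : i ∈ X) (hij : i ≠ j)
    (h : ∀ x ∈ X, β x = 0) : Q.bil β (Q.ev i) = 0 := by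
  rw [hX.bil_ev_congr (γ := 0) hi hij h, bil_ev_eq_sum]
  simp

lemma mem_of_reachable (hX : Q.IsBranch j X) (hj : β j = 0) (hx : x ∈ X)
    (h : Relation.ReflTransGen (SuppAdj β) x y) : y ∈ X := by
  induction h with
  | refl => exact hx
  | tail _ hyz ih =>
    by_contra hz
    exact hyz.1 (hX.eq_of_adj ih hz hyz.2.2 ▸ hj)

lemma eq_zero_or_eq_zero (hX : Q.IsBranch j X) (hconn : Q.SuppConnected β) (hj : β j = 0) :
    (∀ x ∈ X, β x = 0) ∨ ∀ x ∉ X, β x = 0 := by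
  by_contra! h
  obtain ⟨⟨x, hxX, hx⟩, y, hyX, hy⟩ := h
  exact hyX (hX.mem_of_reachable hj hxX (hconn x y hx hy))

lemma suppConnected_indicator (hX : Q.IsBranch j X) (hconn : Q.SuppConnected β)
    (hj : β j ≠ 0) : Q.SuppConnected (X.indicator β) := by
  have hind : ∀ x ∈ X, X.indicator β x = β x := fun x hx => Set.indicator_of_mem hx β
  have key : ∀ z, Relation.ReflTransGen (SuppAdj β) j z → z ∈ X →
      Relation.ReflTransGen (SuppAdj (X.indicator β)) j z := by
    intro z hz
    induction hz with
    | refl => exact fun _ => .refl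
    | @tail y z _ hyz ih =>
      intro hzX
      by_cases hyX : y ∈ X
      · exact (ih hyX).tail ⟨(hind y hyX).symm ▸ hyz.1, (hind z hzX).symm ▸ hyz.2.1, hyz.2.2⟩
      · rw [hX.eq_of_adj hzX hyX hyz.2.2.symm]
  refine suppConnected_of_forall_reachable (x := j) fun z hz => ?_
  have hzX := Set.mem_of_indicator_ne_zero hz
  exact key z (hconn j z hj (hind z hzX ▸ hz)) hzX

lemma indicator_refl (hX : Q.IsBranch j X) (hi : i ∈ X) (hij : i ≠ j) :
    X.indicator (Q.refl i β) = Q.refl i (X.indicator β) := by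
  have hbil : Q.bil (X.indicator β) (Q.ev i) = Q.bil β (Q.ev i) :=
    hX.bil_ev_congr hi hij fun x hx => Set.indicator_of_mem hx β
  ext x
  by_cases hx : x ∈ X
  · simp [refl, hx, hbil]
  · simp [refl_apply_of_ne (ne_of_mem_of_not_mem hi hx).symm, hx]

lemma indicator_refl_of_notMem (hi : i ∉ X) : X.indicator (Q.refl i β) = X.indicator β :=
  Set.indicator_congr fun _ hx => refl_apply_of_ne (ne_of_mem_of_not_mem hx hi) β

lemma raisedRoot_indicator (hX : Q.IsBranch j X) (h : Q.RaisedRoot {j} β) (hj : β j = 1) :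
    Q.RaisedRoot {j} (X.indicator β) := by
  have hind : ∀ (β : Q.I → ℤ), β j = 1 → X.indicator β j = 1 :=
    fun β hj => (Set.indicator_of_mem hX.mem β).trans hj
  induction h with
  | simple i hij _ => simp [ev_of_ne (Ne.symm hij)] at hj
  | base β hβ _ _ hconn hbil =>
    have hβX : 0 ≤ X.indicator β := fun x => Set.indicator_nonneg (fun x _ => hβ x) x
    refine .base _ hβX (fun h => by simpa [h] using hind β hj) (by simp [hind β hj])
      (hX.suppConnected_indicator hconn (by simp [hj])) fun i hij => ?_
    by_cases hi : i ∈ X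
    · exact (hX.bil_ev_congr hi hij fun x hx => Set.indicator_of_mem hx β).trans_le (hbil i hij)
    · exact bil_ev_nonpos_of_eq_zero hβX (Set.indicator_of_notMem hi β)
  | raise i β hij hi _ h ih =>
    rw [refl_apply_of_ne (Ne.symm hij)] at hj
    by_cases hiX : i ∈ X
    · rw [hX.indicator_refl hiX hij]
      refine .raise i _ hij hi (ih hj) ?_
      rwa [hX.bil_ev_congr hiX hij fun x hx => Set.indicator_of_mem hx β]
    · rw [indicator_refl_of_notMem hiX]
      exact ih hj

end IsBranch

/-- A decomposition of the vertex set of `Q` into two branches at `j` which meet only in `j`. -/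
structure IsCut (j : Q.I) (X Y : Set Q.I) : Prop where
  left : Q.IsBranch j X
  right : Q.IsBranch j Y
  union_eq : X ∪ Y = Set.univ
  inter_eq : X ∩ Y = {j}

lemma IsBranch.isCut (hX : Q.IsBranch j X) : Q.IsCut j X (Xᶜ ∪ {j}) where
  left := hX
  right :=
    { mem := Or.inr rfl
      eq_of_adj := fun {x y} hx hy hadj => by
        simp only [Set.mem_union, Set.mem_compl_iff, Set.mem_singleton_iff, not_or,
          not_not] at hx hy
        exact hx.resolve_left fun hxX => hy.2 (hX.eq_of_adj hy.1 hxX hadj.symm) }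
  union_eq := by rw [← Set.union_assoc, Set.union_compl_self, Set.univ_union]
  inter_eq := by rw [Set.inter_union_distrib_left, Set.inter_compl_self, Set.empty_union,
    Set.inter_eq_right.mpr (Set.singleton_subset_iff.mpr hX.mem)]

/-- A starting vector for the construction of `RaisedRoot {j}` with coordinate `1` at `j` and
support in `X`. -/
structure IsBaseVector (j : Q.I) (X : Set Q.I) (β : Q.I → ℤ) : Prop where
  nonneg : 0 ≤ β
  apply_eq_one : β j = 1
  suppConnected : Q.SuppConnected β
  bil_ev_nonpos : ∀ i ≠ j, Q.bil β (Q.ev i) ≤ 0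
  eq_zero : ∀ x ∉ X, β x = 0

lemma le_add_sub_ev (β : Q.I → ℤ) (hγ : 0 ≤ γ) (hj : γ j = 1) : β ≤ β + γ - Q.ev j := by
  rw [add_sub_assoc]
  exact le_add_of_nonneg_right (sub_nonneg.mpr (ev_le hγ hj))

lemma IsBaseVector.suppConnected_add_sub_ev (hβ : Q.IsBaseVector j X β)
    (hγ : Q.IsBaseVector j Y γ) : Q.SuppConnected (β + γ - Q.ev j) := by
  refine hβ.suppConnected.of_union hγ.suppConnected (j := j)
    (by simp [hβ.apply_eq_one]) (by simp [hγ.apply_eq_one])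
    (fun z => apply_ne_zero_of_le hβ.nonneg (le_add_sub_ev β hγ.nonneg hγ.apply_eq_one))
    (fun z => apply_ne_zero_of_le hγ.nonneg
      (add_comm β γ ▸ le_add_sub_ev γ hβ.nonneg hβ.apply_eq_one)) fun z hz => ?_
  by_contra! h₀
  have hzj : z ≠ j := by
    rintro rfl
    exact one_ne_zero (hβ.apply_eq_one.symm.trans h₀.1)
  exact hz (by simp [h₀, ev_of_ne hzj])

lemma RaisedRoot.add_of_bil_eq_zero (hβ : Q.RaisedRoot {j} β) (hj : β j = 1)
    (hβX : ∀ x ∉ X, β x = 0) (hγ : ∀ i ∈ X, i ≠ j → Q.bil γ (Q.ev i) = 0)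
    (hbase : ∀ δ, Q.IsBaseVector j X δ → Q.RaisedRoot {j} (δ + γ)) :
    Q.RaisedRoot {j} (β + γ) := by
  induction hβ with
  | simple i hij _ => simp [ev_of_ne (Ne.symm hij)] at hj
  | base β hβ _ _ hconn hbil => exact hbase β ⟨hβ, hj, hconn, hbil, hβX⟩
  | raise i β hij hi hβ h ih =>
    rw [refl_apply_of_ne (Ne.symm hij)] at hj
    have hiX := mem_of_refl_eq_zero hβ.nonneg h hβX
    have hβX' := eq_zero_of_refl_eq_zero hβ.nonneg h hβX
    rw [← refl_add_of_bil_eq_zero (hγ i hiX hij)]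
    refine .raise i _ hij hi (ih hj hβX') ?_
    rwa [bil_add_left, hγ i hiX hij, add_zero]

namespace IsCut

lemma symm (h : Q.IsCut j X Y) : Q.IsCut j Y X :=
  ⟨h.right, h.left, Set.union_comm X Y ▸ h.union_eq, Set.inter_comm X Y ▸ h.inter_eq⟩

lemma notMem_right (h : Q.IsCut j X Y) (hx : x ∈ X) (hxj : x ≠ j) : x ∉ Y := fun hxY =>
  hxj (h.inter_eq.subset ⟨hx, hxY⟩)

lemma bil_sub_ev_eq_zero (h : Q.IsCut j X Y) (hj : γ j = 1) (hγ : ∀ x ∉ Y, γ x = 0)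
    (hi : i ∈ X) (hij : i ≠ j) : Q.bil (γ - Q.ev j) (Q.ev i) = 0 := by
  refine h.left.bil_ev_eq_zero hi hij fun x hx => ?_
  rcases eq_or_ne x j with rfl | hxj
  · simp [hj]
  · simp [hγ x (h.notMem_right hx hxj), ev_of_ne hxj]

lemma raisedRoot_of_isBaseVector (h : Q.IsCut j X Y) (hβ : Q.IsBaseVector j X β)
    (hγ : Q.IsBaseVector j Y γ) : Q.RaisedRoot {j} (β + γ - Q.ev j) := by
  have hj : (β + γ - Q.ev j) j = 1 := by
    simp [hβ.apply_eq_one, hγ.apply_eq_one]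
  have hne : β + γ - Q.ev j ≠ 0 := fun h₀ => one_ne_zero (hj.symm.trans (congrFun h₀ j))
  refine .base _ (hβ.nonneg.trans (le_add_sub_ev β hγ.nonneg hγ.apply_eq_one)) hne
    (fun i hij => (congrArg _ hij).trans_le hj.le) (hβ.suppConnected_add_sub_ev hγ)
    fun i hij => ?_
  rcases h.union_eq.superset (Set.mem_univ i) with hi | hi
  · rw [add_sub_assoc, bil_add_left,
      h.bil_sub_ev_eq_zero hγ.apply_eq_one hγ.eq_zero hi hij, add_zero]
    exact hβ.bil_ev_nonpos i hij
  · rw [add_sub_right_comm, bil_add_left,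
      h.symm.bil_sub_ev_eq_zero hβ.apply_eq_one hβ.eq_zero hi hij, zero_add]
    exact hγ.bil_ev_nonpos i hij

/- A reflection on one side of the cut does not see the vector on the other side, so the two
constructions can be carried out one after the other. -/
lemma raisedRoot_add_sub_ev (h : Q.IsCut j X Y) (hβ : Q.RaisedRoot {j} β) (hβj : β j = 1)
    (hβX : ∀ x ∉ X, β x = 0) (hγ : Q.RaisedRoot {j} γ) (hγj : γ j = 1)
    (hγY : ∀ x ∉ Y, γ x = 0) : Q.RaisedRoot {j} (β + γ - Q.ev j) := by
  rw [add_sub_assoc]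
  refine hβ.add_of_bil_eq_zero hβj hβX
    (fun i hi hij => h.bil_sub_ev_eq_zero hγj hγY hi hij) fun β' hβ' => ?_
  rw [add_sub_left_comm]
  refine hγ.add_of_bil_eq_zero hγj hγY
    (fun i hi hij => h.symm.bil_sub_ev_eq_zero hβ'.apply_eq_one hβ'.eq_zero hi hij)
    fun γ' hγ' => ?_
  rw [add_sub_left_comm, ← add_sub_assoc]
  exact h.raisedRoot_of_isBaseVector hβ' hγ'

end IsCut

end Branches

section Embeddings

/-- A map which identifies `Q'` with a full subquiver of `Q`, up to the orientation of the arrows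
and up to loops at the vertex `j`. -/
structure IsEmbeddingOff {Q Q' : FinQuiver} (f : Q'.I → Q.I) (j : Q'.I) : Prop where
  injective : Function.Injective f
  cartan_eq : ∀ x y, x ≠ j ∨ y ≠ j → Q'.cartan x y = Q.cartan (f x) (f y)

namespace IsEmbeddingOff

variable {Q Q' : FinQuiver} {f : Q'.I → Q.I} {j x y : Q'.I} {β : Q.I → ℤ} {γ : Q'.I → ℤ}

lemma bil_comp_ev (hf : IsEmbeddingOff f j) (hβ : ∀ x ∉ Set.range f, β x = 0) (hy : y ≠ j) :
    Q'.bil (β ∘ f) (Q'.ev y) = Q.bil β (Q.ev (f y)) := by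
  rw [bil_ev_eq_sum, bil_ev_eq_sum]
  exact Fintype.sum_of_injective f hf.injective _ _ (fun x hx => by rw [hβ x hx, zero_mul])
    fun x => by rw [hf.cartan_eq x y (Or.inr hy), Function.comp_apply]

lemma loopfree_iff (hf : IsEmbeddingOff f j) (hy : y ≠ j) :
    Q'.Loopfree y ↔ Q.Loopfree (f y) := by
  rw [loopfree_iff_cartan, loopfree_iff_cartan, hf.cartan_eq y y (Or.inl hy)]

lemma adj_iff (hf : IsEmbeddingOff f j) (hxy : x ≠ y) : Q'.Adj x y ↔ Q.Adj (f x) (f y) := by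
  rw [← cartan_neg_iff hxy, ← cartan_neg_iff (hf.injective.ne hxy),
    hf.cartan_eq x y (not_and_or.mp fun h => hxy (h.1.trans h.2.symm))]

lemma refl_comp (hf : IsEmbeddingOff f j) (hβ : ∀ x ∉ Set.range f, β x = 0) (hy : y ≠ j) :
    Q.refl (f y) β ∘ f = Q'.refl y (β ∘ f) := by
  ext x
  rcases eq_or_ne x y with rfl | hxy
  · rw [refl_apply_self, hf.bil_comp_ev hβ hy, Function.comp_apply, refl_apply_self,
      Function.comp_apply]
  · rw [refl_apply_of_ne hxy, Function.comp_apply, refl_apply_of_ne (hf.injective.ne hxy),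
      Function.comp_apply]

lemma reachable_map (hf : IsEmbeddingOff f j)
    (h : Relation.ReflTransGen (SuppAdj (β ∘ f)) x y) :
    Relation.ReflTransGen (SuppAdj β) (f x) (f y) := by
  refine h.lift' f fun x y hxy => ?_
  rcases eq_or_ne x y with rfl | hne
  · exact .refl
  · exact .single ⟨hxy.1, hxy.2.1, (hf.adj_iff hne).mp hxy.2.2⟩

lemma reachable_comap (hf : IsEmbeddingOff f j) (hβ : ∀ x ∉ Set.range f, β x = 0)
    (h : Relation.ReflTransGen (SuppAdj β) (f x) (f y)) :
    Relation.ReflTransGen (SuppAdj (β ∘ f)) x y := by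
  have : Nonempty Q'.I := ⟨j⟩
  have hleft := Function.leftInverse_invFun hf.injective
  rw [← hleft x, ← hleft y]
  refine h.lift' (Function.invFun f) fun a b hab => ?_
  obtain ⟨x, rfl⟩ : a ∈ Set.range f := of_not_not (mt (hβ a) hab.1)
  obtain ⟨y, rfl⟩ : b ∈ Set.range f := of_not_not (mt (hβ b) hab.2.1)
  rw [Function.onFun, hleft, hleft]
  rcases eq_or_ne x y with rfl | hne
  · exact .refl
  · exact .single ⟨hab.1, hab.2.1, (hf.adj_iff hne).mpr hab.2.2⟩

lemma suppConnected_comp_iff (hf : IsEmbeddingOff f j) (hβ : ∀ x ∉ Set.range f, β x = 0) :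
    Q'.SuppConnected (β ∘ f) ↔ Q.SuppConnected β := by
  refine ⟨fun h a b ha hb => ?_, fun h x y hx hy => hf.reachable_comap hβ (h _ _ hx hy)⟩
  obtain ⟨x, rfl⟩ : a ∈ Set.range f := of_not_not (mt (hβ a) ha)
  obtain ⟨y, rfl⟩ : b ∈ Set.range f := of_not_not (mt (hβ b) hb)
  exact hf.reachable_map (h x y ha hb)

lemma eq_of_comp_eq {β' : Q.I → ℤ} (hβ : ∀ x ∉ Set.range f, β x = 0)
    (hβ' : ∀ x ∉ Set.range f, β' x = 0) (h : β ∘ f = β' ∘ f) : β = β' := by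
  ext x
  by_cases hx : x ∈ Set.range f
  · obtain ⟨y, rfl⟩ := hx
    exact congrFun h y
  · rw [hβ x hx, hβ' x hx]

lemma raisedRoot_comp (hf : IsEmbeddingOff f j) (h : Q.RaisedRoot {f j} β)
    (hβ : ∀ x ∉ Set.range f, β x = 0) : Q'.RaisedRoot {j} (β ∘ f) := by
  induction h with
  | simple i hij hi =>
    obtain ⟨y, rfl⟩ : i ∈ Set.range f := by
      by_contra hi'
      simpa using hβ i hi'
    have hy : y ≠ j := fun h => hij (congrArg f h)
    rw [show Q.ev (f y) ∘ f = Q'.ev y from funext fun x => by simp [ev, hf.injective.eq_iff]]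
    exact .simple y hy ((hf.loopfree_iff hy).mpr hi)
  | base β hβ₀ hne hj hconn hbil =>
    refine .base _ (fun x => hβ₀ (f x)) (fun h₀ => hne (eq_of_comp_eq hβ (by simp) h₀)) ?_
      ((hf.suppConnected_comp_iff hβ).mpr hconn) fun y hy => ?_
    · rintro _ rfl
      exact hj _ rfl
    · rw [hf.bil_comp_ev hβ hy]
      exact hbil _ (hf.injective.ne hy)
  | raise i β hij hi hβ' h ih =>
    obtain ⟨y, rfl⟩ := mem_of_refl_eq_zero hβ'.nonneg h hβ
    replace hβ := eq_zero_of_refl_eq_zero hβ'.nonneg h hβ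
    have hy : y ≠ j := fun h => hij (congrArg f h)
    rw [hf.refl_comp hβ hy]
    exact .raise y _ hy ((hf.loopfree_iff hy).mpr hi) (ih hβ) (by rwa [hf.bil_comp_ev hβ hy])

lemma raisedRoot_of_comp (hf : IsEmbeddingOff f j) (h : Q'.RaisedRoot {j} γ)
    (hβ : ∀ x ∉ Set.range f, β x = 0) (hγ : β ∘ f = γ) : Q.RaisedRoot {f j} β := by
  induction h generalizing β with
  | simple y hy hloop =>
    have hev : β = Q.ev (f y) := by
      refine eq_of_comp_eq hβ (fun x hx => ev_of_ne fun h => hx ⟨y, h.symm⟩) ?_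
      rw [hγ]
      exact funext fun x => by simp [ev, hf.injective.eq_iff]
    rw [hev]
    exact .simple _ (hf.injective.ne hy) ((hf.loopfree_iff hy).mp hloop)
  | base γ hγ₀ hne hj hconn hbil =>
    subst hγ
    have hβ₀ : 0 ≤ β := fun x => by
      by_cases hx : x ∈ Set.range f
      · obtain ⟨y, rfl⟩ := hx
        exact hγ₀ y
      · exact (hβ x hx).ge
    refine .base β hβ₀ (fun h₀ => hne (by rw [h₀]; rfl)) ?_
      ((hf.suppConnected_comp_iff hβ).mp hconn) fun i hi => ?_
    · rintro _ rfl
      exact hj j rfl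
    by_cases hx : i ∈ Set.range f
    · obtain ⟨y, rfl⟩ := hx
      have hy : y ≠ j := fun h => hi (congrArg f h)
      exact hf.bil_comp_ev hβ hy ▸ hbil y hy
    · exact bil_ev_nonpos_of_eq_zero hβ₀ (hβ i hx)
  | raise y γ hy hloop _ h ih =>
    have hloop' := (hf.loopfree_iff hy).mp hloop
    have hβ' : ∀ x ∉ Set.range f, Q.refl (f y) β x = 0 := fun x hx => by
      rw [refl_apply_of_ne (fun h => hx ⟨y, h.symm⟩), hβ x hx]
    have hγ' : Q.refl (f y) β ∘ f = γ := by
      rw [hf.refl_comp hβ hy, hγ, refl_refl hloop]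
    rw [← refl_refl hloop' β]
    exact .raise _ _ (hf.injective.ne hy) hloop' (ih hβ' hγ')
      (by rwa [← hf.bil_comp_ev hβ' hy, hγ'])

lemma isPosRoot_comp_iff (hf : IsEmbeddingOff f j) (hβ : ∀ x ∉ Set.range f, β x = 0)
    (hj : β (f j) ≤ 1) : Q'.IsPosRoot (β ∘ f) ↔ Q.IsPosRoot β := by
  have : Q'.RaisedRoot {j} (β ∘ f) ↔ Q.RaisedRoot {f j} β :=
    ⟨fun h => hf.raisedRoot_of_comp h hβ rfl, fun h => hf.raisedRoot_comp h hβ⟩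
  rw [raisedRoot_singleton_iff, raisedRoot_singleton_iff] at this
  simpa [hj] using this

end IsEmbeddingOff

variable {Q}

lemma numArrows_restrict {V : Set Q.I} {B : Set Q.A} (hh : ∀ a ∈ B, Q.h a ∈ V)
    (ht : ∀ a ∈ B, Q.t a ∈ V) (x y : (Q.restrict V B hh ht).I)
    (hB : ∀ a ∉ B, ¬ (Q.h a = x.1 ∧ Q.t a = y.1) ∧ ¬ (Q.h a = y.1 ∧ Q.t a = x.1)) :
    (Q.restrict V B hh ht).numArrows x y = Q.numArrows x.1 y.1 := by
  refine Finset.card_bij (fun a _ => Sum.map Subtype.val Subtype.val a) ?_ ?_ ?_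
  · rintro (a | a) ha <;>
    · simp only [Finset.mem_filter, Finset.mem_univ, true_and] at ha ⊢
      exact ⟨congrArg Subtype.val ha.1, congrArg Subtype.val ha.2⟩
  · exact fun a _ b _ h =>
      Sum.map_injective.mpr ⟨Subtype.val_injective, Subtype.val_injective⟩ h
  · rintro (a | a) ha <;> simp only [Finset.mem_filter, Finset.mem_univ, true_and] at ha
    · have haB : a ∈ B := of_not_not fun h => (hB a h).1 ha
      exact ⟨Sum.inl ⟨a, haB⟩, Finset.mem_filter.mpr
        ⟨Finset.mem_univ _, Subtype.ext ha.1, Subtype.ext ha.2⟩, rfl⟩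
    · have haB : a ∈ B := of_not_not fun h => (hB a h).2 ⟨ha.2, ha.1⟩
      exact ⟨Sum.inr ⟨a, haB⟩, Finset.mem_filter.mpr
        ⟨Finset.mem_univ _, Subtype.ext ha.1, Subtype.ext ha.2⟩, rfl⟩

lemma isEmbeddingOff_restrict {V : Set Q.I} {B : Set Q.A} (hh : ∀ a ∈ B, Q.h a ∈ V)
    (ht : ∀ a ∈ B, Q.t a ∈ V) (j : V)
    (hB : ∀ a ∉ B, Q.h a ∈ V → Q.t a ∈ V → Q.h a = j ∧ Q.t a = j) :
    IsEmbeddingOff (Q := Q) (Q' := Q.restrict V B hh ht) Subtype.val j where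
  injective := Subtype.val_injective
  cartan_eq x y hxy := by
    have eq_j : ∀ a ∉ B, ∀ u v : V, Q.h a = u → Q.t a = v → u = j ∧ v = j :=
      fun a ha u v hu hv => by
        obtain ⟨hj, hj'⟩ := hB a ha (hu ▸ u.2) (hv ▸ v.2)
        exact ⟨Subtype.ext (hu.symm.trans hj), Subtype.ext (hv.symm.trans hj')⟩
    have hxy' : ¬ (x = j ∧ y = j) := not_and_or.mpr hxy
    rw [cartan_eq_sub_numArrows, cartan_eq_sub_numArrows, numArrows_restrict hh ht x y
      fun a ha => ⟨fun h => hxy' (eq_j a ha x y h.1 h.2),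
        fun h => hxy' (eq_j a ha y x h.1 h.2).symm⟩]
    rcases eq_or_ne x y with rfl | hne
    · rw [if_pos rfl, if_pos rfl]
    · rw [if_neg hne, if_neg (Subtype.val_injective.ne hne)]

end Embeddings

section SumsOfRoots

variable {Q Q' : FinQuiver} {K : Type} [Field K] {l : Q.I → K} {α β γ : Q.I → ℤ} {i j : Q.I}

lemma pair_zero : Q.pair K l 0 = 0 := by simp [pair]

lemma pair_add (α β : Q.I → ℤ) : Q.pair K l (α + β) = Q.pair K l α + Q.pair K l β := by
  simp [pair, mul_add, Finset.sum_add_distrib]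

lemma Rplus_subset_NRplus : Q.Rplus K l ⊆ Q.NRplus K l := AddSubmonoid.subset_closure

lemma zero_mem_NRplus : 0 ∈ Q.NRplus K l := zero_mem (AddSubmonoid.closure _)

lemma add_mem_NRplus (hα : α ∈ Q.NRplus K l) (hβ : β ∈ Q.NRplus K l) : α + β ∈ Q.NRplus K l :=
  add_mem (S := AddSubmonoid (Q.I → ℤ)) hα hβ

@[elab_as_elim]
lemma NRplus_induction {motive : ∀ α, α ∈ Q.NRplus K l → Prop}
    (root : ∀ β (hβ : β ∈ Q.Rplus K l), motive β (Rplus_subset_NRplus hβ))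
    (zero : motive 0 zero_mem_NRplus)
    (add : ∀ β γ (hβ : β ∈ Q.NRplus K l) (hγ : γ ∈ Q.NRplus K l), motive β hβ → motive γ hγ →
      motive (β + γ) (add_mem_NRplus hβ hγ)) (hα : α ∈ Q.NRplus K l) : motive α hα :=
  AddSubmonoid.closure_induction root zero add hα

lemma nonneg_of_mem_NRplus (hα : α ∈ Q.NRplus K l) : 0 ≤ α := by
  induction hα using NRplus_induction with
  | root β hβ => exact hβ.1.2.1
  | zero => exact le_rfl
  | add β γ _ _ hβ hγ => exact add_nonneg hβ hγ

lemma pair_eq_zero_of_mem_NRplus (hα : α ∈ Q.NRplus K l) : Q.pair K l α = 0 := by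
  induction hα using NRplus_induction with
  | root β hβ => exact hβ.2
  | zero => exact pair_zero
  | add β γ _ _ hβ hγ => rw [pair_add, hβ, hγ, add_zero]

lemma map_mem_NRplus {l' : Q'.I → K} (φ : (Q.I → ℤ) →+ (Q'.I → ℤ)) (hα : α ∈ Q.NRplus K l)
    (hj : α j = 0) (hφ : ∀ β ∈ Q.Rplus K l, β j = 0 → φ β ∈ Q'.NRplus K l') :
    φ α ∈ Q'.NRplus K l' := by
  induction hα using NRplus_induction with
  | root β hβ => exact hφ β hβ hj
  | zero => exact (map_zero φ).symm ▸ zero_mem_NRplus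
  | add β γ hβ hγ ihβ ihγ =>
    obtain ⟨hβj, hγj⟩ := (add_eq_zero_iff_of_nonneg (nonneg_of_mem_NRplus hβ j)
      (nonneg_of_mem_NRplus hγ j)).mp hj
    exact (map_add φ β γ).symm ▸ add_mem_NRplus (ihβ hβj) (ihγ hγj)

lemma exists_eq_root_add (hα : α ∈ Q.NRplus K l) (hj : α j = 1) :
    ∃ β ∈ Q.Rplus K l, ∃ γ ∈ Q.NRplus K l, β j = 1 ∧ γ j = 0 ∧ α = β + γ := by
  induction hα using NRplus_induction with
  | root β hβ => exact ⟨β, hβ, 0, zero_mem_NRplus, hj, rfl, (add_zero β).symm⟩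
  | zero => exact absurd hj zero_ne_one
  | add σ τ hσ hτ ihσ ihτ =>
    have hσ₀ : 0 ≤ σ j := nonneg_of_mem_NRplus hσ j
    have hτ₀ : 0 ≤ τ j := nonneg_of_mem_NRplus hτ j
    rw [Pi.add_apply] at hj
    rcases (by omega : σ j = 1 ∧ τ j = 0 ∨ σ j = 0 ∧ τ j = 1) with ⟨hσj, hτj⟩ | ⟨hσj, hτj⟩
    · obtain ⟨β, hβ, γ, hγ, hβj, hγj, rfl⟩ := ihσ hσj
      exact ⟨β, hβ, γ + τ, add_mem_NRplus hγ hτ, hβj, by simp [hγj, hτj], add_assoc β γ τ⟩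
    · obtain ⟨β, hβ, γ, hγ, hβj, hγj, rfl⟩ := ihτ hτj
      exact ⟨β, hβ, σ + γ, add_mem_NRplus hσ hγ, hβj, by simp [hγj, hσj], add_left_comm σ β γ⟩

end SumsOfRoots

section Decomposition

variable {Q Q' : FinQuiver} {X Y : Set Q.I} {β γ : Q.I → ℤ}

lemma IsBranch.isPosRoot_indicator {j : Q.I} (hX : Q.IsBranch j X) (hβ : Q.IsPosRoot β)
    (hj : β j = 1) : Q.IsPosRoot (X.indicator β) :=
  (raisedRoot_singleton_iff.mp
    (hX.raisedRoot_indicator (raisedRoot_singleton_iff.mpr ⟨hβ, hj.le⟩) hj)).1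

lemma IsCut.indicator_add_indicator_sub_ev {j : Q.I} (h : Q.IsCut j X Y) (hj : β j = 1) :
    X.indicator β + Y.indicator β - Q.ev j = β := by
  have hinter : (X ∩ Y).indicator β = Q.ev j := by
    ext x
    simp only [h.inter_eq, Set.indicator_apply, Set.mem_singleton_iff, ev]
    split_ifs with hx
    · rw [hx, hj]
    · rfl
  rw [← Set.indicator_union_add_inter, h.union_eq, Set.indicator_univ, hinter, add_sub_cancel_right]

lemma IsCut.isPosRoot_iff {j : Q.I} (h : Q.IsCut j X Y) (hj : β j = 1) :
    Q.IsPosRoot β ↔ Q.IsPosRoot (X.indicator β) ∧ Q.IsPosRoot (Y.indicator β) := by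
  refine ⟨fun hβ => ⟨h.left.isPosRoot_indicator hβ hj, h.right.isPosRoot_indicator hβ hj⟩,
    fun ⟨hβX, hβY⟩ => ?_⟩
  have hjX : X.indicator β j = 1 := (Set.indicator_of_mem h.left.mem β).trans hj
  have hjY : Y.indicator β j = 1 := (Set.indicator_of_mem h.right.mem β).trans hj
  rw [← h.indicator_add_indicator_sub_ev hj]
  exact (raisedRoot_singleton_iff.mp <| h.raisedRoot_add_sub_ev
    (raisedRoot_singleton_iff.mpr ⟨hβX, hjX.le⟩) hjX (fun x hx => Set.indicator_of_notMem hx β)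
    (raisedRoot_singleton_iff.mpr ⟨hβY, hjY.le⟩) hjY fun x hx => Set.indicator_of_notMem hx β).1

variable {f : Q'.I → Q.I} {j : Q'.I}

lemma IsEmbeddingOff.isPosRoot_indicator_range_iff (hf : IsEmbeddingOff f j)
    (hj : β (f j) ≤ 1) : Q.IsPosRoot ((Set.range f).indicator β) ↔ Q'.IsPosRoot (β ∘ f) := by
  rw [← hf.isPosRoot_comp_iff (fun x hx => Set.indicator_of_notMem hx β)
    ((Set.indicator_of_mem (Set.mem_range_self j) β).trans_le hj)]
  exact iff_of_eq (congrArg Q'.IsPosRoot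
    (funext fun x => Set.indicator_of_mem (Set.mem_range_self x) β))

namespace IsCut

variable {K : Type} [Field K] {l : Q.I → K}

lemma eq_of_indicator_eq_of_comp_eq (h : Q.IsCut (f j) X (Set.range f))
    (hX : X.indicator β = X.indicator γ) (hf : β ∘ f = γ ∘ f) : β = γ := by
  ext x
  rcases h.union_eq.superset (Set.mem_univ x) with hx | ⟨y, rfl⟩
  · simpa [hx] using congrFun hX x
  · exact congrFun hf y

lemma comp_eq_zero (h : Q.IsCut (f j) X (Set.range f)) (hβ : ∀ x ∉ X, β x = 0)
    (hj : β (f j) = 0) : β ∘ f = 0 := by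
  ext x
  rcases eq_or_ne (f x) (f j) with hx | hx
  · exact (congrArg β hx).trans hj
  · exact hβ _ (h.symm.notMem_right (Set.mem_range_self x) hx)

lemma indicator_eq_zero (h : Q.IsCut (f j) X (Set.range f)) (hβ : ∀ x ∉ Set.range f, β x = 0)
    (hj : β (f j) = 0) : X.indicator β = 0 := by
  refine Set.indicator_eq_zero'.mpr (Set.disjoint_left.mpr fun x hx hxX => hx ?_)
  rcases eq_or_ne x (f j) with rfl | hxj
  · exact hj
  · exact hβ x (h.notMem_right hxX hxj)

lemma pair_eq_add (h : Q.IsCut (f j) X (Set.range f)) (hf : Function.Injective f)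
    (l : Q.I → K) (β : Q.I → ℤ) :
    Q.pair K l β = Q.pair K l (X.indicator β) +
      Q'.pair K (Function.update (l ∘ f) j 0) (β ∘ f) := by
  classical
  have hcomp : Q'.pair K (Function.update (l ∘ f) j 0) (β ∘ f) =
      ∑ x, if x ∈ X then 0 else l x * β x := by
    refine Fintype.sum_of_injective f hf _ _ (fun x hx => if_pos ?_) fun x => ?_
    · exact (h.union_eq.superset (Set.mem_univ x)).resolve_right hx
    · have hmem : f x ∈ X ↔ x = j :=
        ⟨fun hx => hf (h.inter_eq.subset ⟨hx, Set.mem_range_self x⟩), fun hx => hx ▸ h.left.mem⟩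
      simp only [hmem, Function.update_apply, ite_mul, zero_mul, Function.comp_apply]
  rw [hcomp, pair, pair, ← Finset.sum_add_distrib]
  refine Finset.sum_congr rfl fun x _ => ?_
  by_cases hx : x ∈ X <;> simp [hx]

lemma mem_Rplus_iff_of_eq_one (h : Q.IsCut (f j) X (Set.range f)) (hf : IsEmbeddingOff f j)
    (hj : β (f j) = 1) (hpair : Q.pair K l (X.indicator β) = 0) :
    β ∈ Q.Rplus K l ↔ X.indicator β ∈ Q.Rplus K l ∧
      β ∘ f ∈ Q'.Rplus K (Function.update (l ∘ f) j 0) := by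
  have hcomp : Q.pair K l β = Q'.pair K (Function.update (l ∘ f) j 0) (β ∘ f) := by
    rw [h.pair_eq_add hf.injective, hpair, zero_add]
  simp only [Rplus, Set.mem_ofPred_eq, h.isPosRoot_iff hj,
    hf.isPosRoot_indicator_range_iff hj.le, hcomp, hpair, and_true, and_assoc]

lemma indicator_mem_and_comp_mem_of_mem_Rplus (h : Q.IsCut (f j) X (Set.range f))
    (hf : IsEmbeddingOff f j) (hβ : β ∈ Q.Rplus K l) (hj : β (f j) = 0) :
    X.indicator β ∈ Q.NRplus K l ∧ β ∘ f ∈ Q'.NRplus K (Function.update (l ∘ f) j 0) := by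
  have hconn : Q.SuppConnected β := (FinQuiver.isPosRoot_iff.mp hβ.1).suppConnected
  rcases h.left.eq_zero_or_eq_zero hconn hj with hX | hX
  · have hind : X.indicator β = 0 := Set.indicator_eq_zero'.mpr
      (Set.disjoint_left.mpr fun x hx hxX => hx (hX x hxX))
    have hrange : ∀ x ∉ Set.range f, β x = 0 := fun x hx =>
      hX x ((h.union_eq.superset (Set.mem_univ x)).resolve_right hx)
    have hpair := h.pair_eq_add hf.injective l β
    rw [hβ.2, hind, pair_zero, zero_add] at hpair
    exact ⟨hind ▸ zero_mem_NRplus, Rplus_subset_NRplus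
      ⟨(hf.isPosRoot_comp_iff hrange (hj.trans_le zero_le_one)).mpr hβ.1, hpair.symm⟩⟩
  · rw [Set.indicator_eq_self.mpr (Function.support_subset_iff'.mpr hX), h.comp_eq_zero hX hj]
    exact ⟨Rplus_subset_NRplus hβ, zero_mem_NRplus⟩

lemma extend_mem_NRplus (h : Q.IsCut (f j) X (Set.range f)) (hf : IsEmbeddingOff f j)
    {δ : Q'.I → ℤ} (hδ : δ ∈ Q'.NRplus K (Function.update (l ∘ f) j 0)) (hj : δ j = 0) :
    Function.extend f δ 0 ∈ Q.NRplus K l := by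
  refine map_mem_NRplus (Function.ExtendByZero.hom ℤ f) hδ hj fun γ hγ hj => ?_
  have hcomp : Function.extend f γ 0 ∘ f = γ := Function.extend_comp hf.injective γ 0
  have hrange : ∀ x ∉ Set.range f, Function.extend f γ 0 x = 0 := fun x hx =>
    Function.extend_apply' γ (0 : Q.I → ℤ) x hx
  have hj' : Function.extend f γ 0 (f j) = 0 := (congrFun hcomp j).trans hj
  refine Rplus_subset_NRplus
    ⟨(hf.isPosRoot_comp_iff hrange (hj'.trans_le zero_le_one)).mp (hcomp.symm ▸ hγ.1), ?_⟩
  change Q.pair K l (Function.extend f γ 0) = 0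
  rw [h.pair_eq_add hf.injective, h.indicator_eq_zero hrange hj', hcomp, pair_zero, hγ.2, add_zero]

lemma indicator_add_extend_comp (h : Q.IsCut (f j) X (Set.range f)) (hf : Function.Injective f)
    (hj : β (f j) = 0) : X.indicator β + Function.extend f (β ∘ f) 0 = β := by
  have hext : Function.extend f (β ∘ f) 0 ∘ f = β ∘ f := Function.extend_comp hf _ 0
  have hX : X.indicator (Function.extend f (β ∘ f) 0) = 0 := h.indicator_eq_zero
    (fun x hx => Function.extend_apply' (β ∘ f) (0 : Q.I → ℤ) x hx) ((congrFun hext j).trans hj)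
  have hcomp : X.indicator β ∘ f = 0 := h.comp_eq_zero
    (fun x hx => Set.indicator_of_notMem hx β) ((Set.indicator_of_mem h.left.mem β).trans hj)
  refine h.eq_of_indicator_eq_of_comp_eq ?_ ?_
  · rw [Set.indicator_add', Set.indicator_indicator, Set.inter_self, hX, add_zero]
  · rw [Pi.add_comp, hext, hcomp, zero_add]

lemma mem_NRplus_iff_of_eq_zero (h : Q.IsCut (f j) X (Set.range f)) (hf : IsEmbeddingOff f j)
    (hj : β (f j) = 0) :
    β ∈ Q.NRplus K l ↔ X.indicator β ∈ Q.NRplus K l ∧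
      β ∘ f ∈ Q'.NRplus K (Function.update (l ∘ f) j 0) := by
  refine ⟨fun hβ => ⟨?_, ?_⟩, fun ⟨hX, hcomp⟩ => ?_⟩
  · exact map_mem_NRplus (Set.indicatorHom ℤ X) hβ hj fun γ hγ hj =>
      (h.indicator_mem_and_comp_mem_of_mem_Rplus hf hγ hj).1
  · exact map_mem_NRplus (LinearMap.funLeft ℤ ℤ f).toAddMonoidHom hβ hj fun γ hγ hj =>
      (h.indicator_mem_and_comp_mem_of_mem_Rplus hf hγ hj).2
  · rw [← h.indicator_add_extend_comp hf.injective hj]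
    exact add_mem_NRplus hX (h.extend_mem_NRplus hf hcomp hj)

lemma exists_indicator_eq_comp_eq (h : Q.IsCut (f j) X (Set.range f))
    (hf : Function.Injective f) {δ : Q'.I → ℤ} (hβ : ∀ x ∉ X, β x = 0) (hj : β (f j) = δ j) :
    ∃ γ : Q.I → ℤ, X.indicator γ = β ∧ γ ∘ f = δ := by
  classical
  refine ⟨X.piecewise β (Function.extend f δ 0), ?_, ?_⟩
  · ext x
    by_cases hx : x ∈ X <;> simp [hx, hβ]
  · ext x
    by_cases hx : f x ∈ X
    · obtain rfl : x = j := hf (h.inter_eq.subset ⟨hx, Set.mem_range_self x⟩)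
      simp [hx, hj]
    · simp [hx, hf.extend_apply]

lemma mem_NRplus_of_indicator_mem_of_comp_mem (h : Q.IsCut (f j) X (Set.range f))
    (hf : IsEmbeddingOff f j) (hj : β (f j) = 1) (hX : X.indicator β ∈ Q.NRplus K l)
    (hcomp : β ∘ f ∈ Q'.NRplus K (Function.update (l ∘ f) j 0)) : β ∈ Q.NRplus K l := by
  obtain ⟨γ, hγ, σ, hσ, hγj, hσj, hγσ⟩ := exists_eq_root_add (j := f j) hX
    ((Set.indicator_of_mem h.left.mem β).trans hj)
  obtain ⟨δ, hδ, τ, hτ, hδj, hτj, hδτ⟩ := exists_eq_root_add hcomp hj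
  have hzero : ∀ x ∉ X, γ x = 0 ∧ σ x = 0 := fun x hx => by
    rw [← add_eq_zero_iff_of_nonneg (hγ.1.2.1 x) (nonneg_of_mem_NRplus hσ x), ← Pi.add_apply,
      ← hγσ, Set.indicator_of_notMem hx]
  obtain ⟨ρ, rfl, rfl⟩ := h.exists_indicator_eq_comp_eq hf.injective (fun x hx => (hzero x hx).1)
    (hγj.trans hδj.symm)
  obtain ⟨υ, rfl, rfl⟩ := h.exists_indicator_eq_comp_eq hf.injective (fun x hx => (hzero x hx).2)
    (hσj.trans hτj.symm)
  have hβ : β = ρ + υ := h.eq_of_indicator_eq_of_comp_eq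
    (by rw [hγσ, Set.indicator_add']) (by rw [hδτ, Pi.add_comp])
  rw [hβ]
  exact add_mem_NRplus
    (Rplus_subset_NRplus ((h.mem_Rplus_iff_of_eq_one hf hδj hγ.2).mpr ⟨hγ, hδ⟩))
    ((h.mem_NRplus_iff_of_eq_zero hf hτj).mpr ⟨hσ, hτ⟩)

theorem mem_NRplus_iff_of_eq_one (h : Q.IsCut (f j) X (Set.range f)) (hf : IsEmbeddingOff f j)
    (hj : β (f j) = 1) (hpair : Q.pair K l (X.indicator β) = 0) :
    β ∈ Q.NRplus K l ↔ X.indicator β ∈ Q.NRplus K l ∧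
      β ∘ f ∈ Q'.NRplus K (Function.update (l ∘ f) j 0) := by
  refine ⟨fun hβ => ?_, fun ⟨hX, hcomp⟩ =>
    h.mem_NRplus_of_indicator_mem_of_comp_mem hf hj hX hcomp⟩
  obtain ⟨γ, hγ, σ, hσ, hγj, hσj, rfl⟩ := exists_eq_root_add hβ hj
  obtain ⟨hσX, hσcomp⟩ := (h.mem_NRplus_iff_of_eq_zero hf hσj).mp hσ
  rw [Set.indicator_add', pair_add, pair_eq_zero_of_mem_NRplus hσX, add_zero] at hpair
  obtain ⟨hγX, hγcomp⟩ := (h.mem_Rplus_iff_of_eq_one hf hγj hpair).mp hγ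
  rw [Set.indicator_add', Pi.add_comp]
  exact ⟨add_mem_NRplus (Rplus_subset_NRplus hγX) hσX,
    add_mem_NRplus (Rplus_subset_NRplus hγcomp) hσcomp⟩

end IsCut
end Decomposition

section UniqueArrow

variable {Q} {J V : Set Q.I} {j k : Q.I} {b : Q.A}

lemma isBranch_of_unique_arrow (hJV : IsCompl J V) (hj : j ∈ J) (hk : k ∈ V)
    (hb : Q.h b = j ∧ Q.t b = k ∨ Q.h b = k ∧ Q.t b = j)
    (huniq : ∀ a, Q.h a ∈ J ∧ Q.t a ∈ V ∨ Q.h a ∈ V ∧ Q.t a ∈ J → a = b) :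
    Q.IsBranch j J where
  mem := hj
  eq_of_adj := by
    have hkJ : k ∉ J := Set.disjoint_right.mp hJV.disjoint hk
    rintro x y hx hy ⟨a, ⟨rfl, rfl⟩ | ⟨rfl, rfl⟩⟩
    · obtain rfl := huniq a (Or.inl ⟨hx, hJV.compl_eq ▸ hy⟩)
      exact (hb.resolve_right fun h => hkJ (h.1 ▸ hx)).1
    · obtain rfl := huniq a (Or.inr ⟨hJV.compl_eq ▸ hy, hx⟩)
      exact (hb.resolve_left fun h => hkJ (h.2 ▸ hx)).2

lemma eq_and_eq_of_unique_arrow (hj : j ∈ J)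
    (huniq : ∀ a, Q.h a ∈ J ∧ Q.t a ∈ V ∨ Q.h a ∈ V ∧ Q.t a ∈ J → a = b) {a : Q.A}
    (ha : a ∉ {a | Q.h a ∈ V ∧ Q.t a ∈ V} ∪ {b}) (hh : Q.h a ∈ V ∪ {j})
    (ht : Q.t a ∈ V ∪ {j}) : Q.h a = j ∧ Q.t a = j := by
  obtain ⟨haV, hab⟩ := not_or.mp ha
  have hcross := mt (huniq a) hab
  rcases hh with hh | rfl <;> rcases ht with ht | ht
  · exact absurd ⟨hh, ht⟩ haV
  · exact absurd (Or.inr ⟨hh, Set.mem_singleton_iff.mp ht ▸ hj⟩) hcross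
  · exact absurd (Or.inl ⟨hj, ht⟩) hcross
  · exact ⟨rfl, ht⟩

end UniqueArrow

end FinQuiver

theorem stmt19_general (Q : FinQuiver) (K : Type) [Field K] (l : Q.I → K) (J V : Set Q.I)
    (hJV : IsCompl J V) (j : Q.I) (hJ : Q.IsBranch j J) (B : Set Q.A)
    (hh : ∀ a ∈ B, Q.h a ∈ V ∪ {j}) (ht : ∀ a ∈ B, Q.t a ∈ V ∪ {j})
    (hB : ∀ a ∉ B, Q.h a ∈ V ∪ {j} → Q.t a ∈ V ∪ {j} → Q.h a = j ∧ Q.t a = j)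
    (α αJ αV : Q.I → ℤ) (hsum : α = αJ + αV) (hsJ : ∀ i, αJ i ≠ 0 → i ∈ J)
    (hsV : ∀ i, αV i ≠ 0 → i ∈ V) (hαj : α j = 1) (hlJ : Q.pair K l αJ = 0) :
    α ∈ Q.NRplus K l ↔ αJ ∈ Q.NRplus K l ∧
      (fun i => Q.ev j i.1 + αV i.1) ∈ (Q.restrict (V ∪ {j}) B hh ht).NRplus K
        (fun i => if i.1 = j then 0 else l i.1) := by
  let j' : (Q.restrict (V ∪ {j}) B hh ht).I := ⟨j, Or.inr rfl⟩
  let f : (Q.restrict (V ∪ {j}) B hh ht).I → Q.I := Subtype.val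
  have hf : FinQuiver.IsEmbeddingOff f j' := FinQuiver.isEmbeddingOff_restrict hh ht _ hB
  have hrange : Set.range f = Jᶜ ∪ {j} := hJV.compl_eq ▸ Subtype.range_coe
  have hcut : Q.IsCut (f j') J (Set.range f) := hrange ▸ hJ.isCut
  have hV₀ : ∀ i ∈ J, αV i = 0 := fun i hi => of_not_not fun h =>
    Set.disjoint_left.mp hJV.disjoint hi (hsV i h)
  have hαJ : J.indicator α = αJ := by
    rw [hsum, Set.indicator_add', Set.indicator_eq_self.mpr hsJ, add_eq_left]
    exact Set.indicator_eq_zero'.mpr (Set.disjoint_left.mpr fun i h hi => h (hV₀ i hi))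
  have hαV : ∀ i ∈ V ∪ {j}, Q.ev j i + αV i = α i := by
    intro i hi
    rcases eq_or_ne i j with rfl | hij
    · rw [FinQuiver.ev_self, hV₀ i hJ.mem, hαj, add_zero]
    · have hiJ : αJ i = 0 := of_not_not fun h =>
        Set.disjoint_left.mp hJV.disjoint (hsJ i h) (hi.resolve_right hij)
      rw [FinQuiver.ev_of_ne hij, hsum, Pi.add_apply, hiJ]
  have hcomp : (fun i => Q.ev j i.1 + αV i.1) = α ∘ f := funext fun i => hαV i.1 i.2
  have hweight : (fun i => if i.1 = j then 0 else l i.1) = Function.update (l ∘ f) j' 0 := by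
    ext i
    rw [Function.update_apply]
    exact if_congr (hf.injective.eq_iff (b := j')) rfl rfl
  rw [hcomp, hweight, ← hαJ]
  exact hcut.mem_NRplus_iff_of_eq_one hf hαj (hαJ ▸ hlJ)

/-- with a unique arrow `b` between `𝒥` and `𝒦` joining `j ∈ 𝒥` to
`k ∈ 𝒦`, let `Q̃` be the quiver on `𝒦 ∪ {j}` consisting of `b` and all arrows with
head and tail in `𝒦`, and let `μ` agree with `λ` on `𝒦` with `μ_j = 0`.  If
`α_j = 1` and `λ·α_𝒥 = λ·α_𝒦 = 0`, then `α ∈ ℕR_λ^+` iff `α_𝒥 ∈ ℕR_λ^+` and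
`ε_j + α_𝒦 ∈ ℕR_μ^+` (for `Q̃`). -/
theorem stmt19 (Q : FinQuiver) (K : Type) [Field K] [CharZero K] [IsAlgClosed K]
    (l : Q.I → K) (J Kv : Set Q.I)
    (hdisj : ∀ i, ¬ (i ∈ J ∧ i ∈ Kv)) (hcover : ∀ i, i ∈ J ∨ i ∈ Kv)
    (j k : Q.I) (hj : j ∈ J) (hk : k ∈ Kv) (b : Q.A)
    (hb : (Q.h b = j ∧ Q.t b = k) ∨ (Q.h b = k ∧ Q.t b = j))
    (huniq : ∀ a : Q.A,
      ((Q.h a ∈ J ∧ Q.t a ∈ Kv) ∨ (Q.h a ∈ Kv ∧ Q.t a ∈ J)) → a = b)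
    (α αJ αK : Q.I → ℤ)
    (hsum : α = αJ + αK)
    (hsJ : ∀ i, αJ i ≠ 0 → i ∈ J) (hsK : ∀ i, αK i ≠ 0 → i ∈ Kv)
    (hpos : ∀ i, 0 ≤ α i) (hαj : α j = 1)
    (hlJ : Q.pair K l αJ = 0) (hlK : Q.pair K l αK = 0) :
    α ∈ Q.NRplus K l ↔
      (αJ ∈ Q.NRplus K l ∧
        (fun i => Q.ev j i.1 + αK i.1) ∈
          (Q.restrict (Kv ∪ {j}) ({a | Q.h a ∈ Kv ∧ Q.t a ∈ Kv} ∪ {b})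
            (by
              intro a ha
              rcases ha with h1 | he
              · exact Or.inl h1.1
              · have hab : a = b := he
                rcases hb with ⟨h1, h2⟩ | ⟨h1, h2⟩
                · exact Or.inr (by rw [hab]; exact h1)
                · exact Or.inl (by rw [hab, h1]; exact hk))
            (by
              intro a ha
              rcases ha with h1 | he
              · exact Or.inl h1.2
              · have hab : a = b := he
                rcases hb with ⟨h1, h2⟩ | ⟨h1, h2⟩
                · exact Or.inl (by rw [hab, h2]; exact hk)
                · exact Or.inr (by rw [hab]; exact h2))).NRplus K
          (fun i => if i.1 = j then 0 else l i.1)) := by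
  have hJK : IsCompl J Kv := ⟨Set.disjoint_left.mpr fun i hiJ hiK => hdisj i ⟨hiJ, hiK⟩,
    codisjoint_iff.mpr (Set.eq_univ_of_forall hcover)⟩
  exact stmt19_general Q K l J Kv hJK j (FinQuiver.isBranch_of_unique_arrow hJK hj hk hb huniq) _
    _ _ (fun _ => FinQuiver.eq_and_eq_of_unique_arrow hj huniq) α αJ αK hsum hsJ hsK hαj hlJ

end
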